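/- arXiv:1106.5480 — 2 statements merged into one kernel-verified Lean document; each statement's English description precedes it below -/
import Mathlib

section
/- Let g_n denote the number of strict partial order relations on {1, …, n} that are strongly graded and avoid 3+1, and let G(x) = Σ_{n ≥ 0} g_n x^n/n! as a formal power series over ℚ. Then (G(x) − 1)·(e^x(2e^x + 1) + (e^{2x} − 2e^x − 1)·Ψ(x)) = e^{2x}(2e^x − 3) + e^x(e^x − 2)^2·Ψ(x), where Ψ(x) = Σ_{m,n ≥ 0} 2^{mn} x^{m+n}/(m! n!) and e^x is the exponential power series. Equivalently, G(x) = 1 + (e^{2x}(2e^x − 3) + e^x(e^x − 2)^2 Ψ(x)) / (e^x(2e^x + 1) + (e^{2x} − 2e^x − 1)Ψ(x)). -/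
/-- `r` is a strict partial order relation (irreflexive and transitive). -/
def IsStrictOrderRel {n : ℕ} (r : Fin n → Fin n → Prop) : Prop :=
  (∀ a, ¬ r a a) ∧ ∀ a b c, r a b → r b c → r a c

/-- the poset `(Fin n, r)` avoids `3+1`: there is no chain `x < y < z` together with
an element `w` incomparable to each of `x`, `y`, `z`. -/
def RelAvoids31 {n : ℕ} (r : Fin n → Fin n → Prop) : Prop :=
  ¬ ∃ w x y z : Fin n, r x y ∧ r y z ∧
      (¬ r w x ∧ ¬ r x w) ∧ (¬ r w y ∧ ¬ r y w) ∧ (¬ r w z ∧ ¬ r z w)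

/-- a finset that is a chain of the poset `(Fin n, r)`. -/
def RelChain {n : ℕ} (r : Fin n → Fin n → Prop) (s : Finset (Fin n)) : Prop :=
  ∀ a ∈ s, ∀ b ∈ s, a ≠ b → r a b ∨ r b a

/-- a maximal chain of the poset `(Fin n, r)`. -/
def RelMaxChain {n : ℕ} (r : Fin n → Fin n → Prop) (s : Finset (Fin n)) : Prop :=
  RelChain r s ∧ ∀ t : Finset (Fin n), RelChain r t → s ⊆ t → s = t

/-- strongly graded: all maximal chains have the same number of elements. -/
def RelStronglyGraded {n : ℕ} (r : Fin n → Fin n → Prop) : Prop :=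
  ∀ s t : Finset (Fin n), RelMaxChain r s → RelMaxChain r t → s.card = t.card

/-- weakly graded: there is a rank function increasing by one along covers such that
every connected component of the comparability graph contains an element of rank `0`. -/
def RelWeaklyGraded {n : ℕ} (r : Fin n → Fin n → Prop) : Prop :=
  ∃ rk : Fin n → ℕ,
    (∀ a b, r a b → (¬ ∃ c, r a c ∧ r c b) → rk b = rk a + 1) ∧
    ∀ v, ∃ u, Relation.ReflTransGen (fun a b => r a b ∨ r b a) v u ∧ rk u = 0

/-- the number of strongly graded `3+1`-avoiding strict partial orders on `{1, …, n}`. -/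
noncomputable def gCount (n : ℕ) : ℕ :=
  Nat.card {r : Fin n → Fin n → Prop //
    IsStrictOrderRel r ∧ RelStronglyGraded r ∧ RelAvoids31 r}

/-- the number of weakly graded `3+1`-avoiding strict partial orders on `{1, …, n}`. -/
noncomputable def wCount (n : ℕ) : ℕ :=
  Nat.card {r : Fin n → Fin n → Prop //
    IsStrictOrderRel r ∧ RelWeaklyGraded r ∧ RelAvoids31 r}

/-- `Ψ(x) = Σ_{m,n ≥ 0} 2^{mn} x^{m+n}/(m! n!)`. -/
noncomputable def Psi : PowerSeries ℚ :=
  PowerSeries.mk fun N =>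
    ∑ p ∈ Finset.HasAntidiagonal.antidiagonal N, (2 : ℚ) ^ (p.1 * p.2) / (p.1.factorial * p.2.factorial)

/-- the exponential series `e^x`. -/
noncomputable def E : PowerSeries ℚ := PowerSeries.exp ℚ

/-- the egf of strongly graded `3+1`-avoiding posets. -/
noncomputable def G : PowerSeries ℚ :=
  PowerSeries.mk fun n => (gCount n : ℚ) / n.factorial

/-!
In a strongly graded `3+1`-avoiding poset, put each element at the level given by its height. Two
elements at least two levels apart are comparable, so the order is determined by the levels and by
the *gaps*, the pairs of incomparable elements on consecutive levels; avoiding `3+1` amounts to the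
absence of two consecutive gaps, and strong gradedness says that no maximal chain skips a level.

Peel off the top level together with the elements just below it that have a gap above them. What
remains is an arbitrary diagram with one level less, and the gaps inside the peeled part form a
bipartite graph all of whose sources have a target, counted by `Ψ e⁻ˣ`. The new top level is
skippable exactly when one source has all the sinks as targets. The level below is skippable exactly
when it was so before and one sink is a target of all the sources. Hence the generating functions
`P` of the diagrams whose levels, except perhaps the last, cannot be skipped, and `Q` of those among
them whose last level can be, solve a linear system, and `G - 1 = P - Q`.
-/

section ExponentialGeneratingFunctions

open Finset

variable {V : Type*}

/-- `P` is the exponential generating function of the set function `f`: in particular `f R` depends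
only on the cardinality of the set of labels `R`. -/
def IsEGF (f : Finset V → ℚ) (P : PowerSeries ℚ) : Prop :=
  ∀ R, f R = (#R).factorial * PowerSeries.coeff #R P

variable {f g : Finset V → ℚ} {P Q : PowerSeries ℚ}

lemma IsEGF.add (hf : IsEGF f P) (hg : IsEGF g Q) : IsEGF (fun R => f R + g R) (P + Q) := by
  intro R
  simp only [hf R, hg R, map_add, mul_add]

lemma IsEGF.sub (hf : IsEGF f P) (hg : IsEGF g Q) : IsEGF (fun R => f R - g R) (P - Q) := by
  intro R
  simp only [hf R, hg R, map_sub, mul_sub]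

lemma isEGF_E : IsEGF (fun _ : Finset V => 1) E := by
  intro R
  simp [E, PowerSeries.coeff_exp, Nat.factorial_ne_zero]

lemma constantCoeff_E : PowerSeries.constantCoeff E = 1 := by
  simp [E]

lemma constantCoeff_Psi : PowerSeries.constantCoeff Psi = 1 := by
  simp [Psi]

lemma E_mul_inv : E * E⁻¹ = 1 :=
  PowerSeries.mul_inv_cancel _ (by simp [constantCoeff_E])

lemma isEGF_one [DecidableEq V] : IsEGF (fun R : Finset V => if R = ∅ then 1 else 0) 1 := by
  intro R
  rcases R.eq_empty_or_nonempty with rfl | hR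
  · simp
  · simp [PowerSeries.coeff_one, hR.ne_empty]

lemma IsEGF.mul [DecidableEq V] (hf : IsEGF f P) (hg : IsEGF g Q) :
    IsEGF (fun R => ∑ S ∈ R.powerset, f S * g (R \ S)) (P * Q) := by
  intro R
  have hterm : ∀ S ∈ R.powerset, f S * g (R \ S) =
      (#S).factorial * PowerSeries.coeff #S P *
        ((#R - #S).factorial * PowerSeries.coeff (#R - #S) Q) := by
    intro S hS
    rw [hf S, hg (R \ S), card_sdiff_of_subset (mem_powerset.1 hS)]
  beta_reduce
  rw [sum_congr rfl hterm, sum_powerset_apply_card fun j => (j.factorial : ℚ) *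
      PowerSeries.coeff j P * ((#R - j).factorial * PowerSeries.coeff (#R - j) Q),
    PowerSeries.coeff_mul, Nat.sum_antidiagonal_eq_sum_range_succ fun i j =>
      PowerSeries.coeff i P * PowerSeries.coeff j Q, mul_sum]
  refine sum_congr rfl fun j hj => ?_
  rw [← Nat.choose_mul_factorial_mul_factorial (mem_range_succ_iff.1 hj), nsmul_eq_mul]
  push_cast
  ring

lemma sum_powerset_injective {M : Type*} [AddCommGroup M] {f g : Finset V → M}
    (h : ∀ R : Finset V, ∑ S ∈ R.powerset, f S = ∑ S ∈ R.powerset, g S) : f = g := by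
  classical
  funext R
  induction R using Finset.strongInduction with
  | H R ih =>
    have hR := h R
    rw [← add_sum_erase _ _ (mem_powerset_self R), ← add_sum_erase _ _ (mem_powerset_self R),
      sum_congr rfl fun S hS => ih S ?_] at hR
    · exact add_right_cancel hR
    · rw [mem_erase, mem_powerset] at hS
      exact hS.2.ssubset_of_ne hS.1

lemma IsEGF.of_sum_powerset (h : IsEGF (fun R => ∑ S ∈ R.powerset, f S) P) :
    IsEGF f (P * E⁻¹) := by
  classical
  set f' : Finset V → ℚ := fun R => (#R).factorial * PowerSeries.coeff #R (P * E⁻¹)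
  have hf' : IsEGF f' (P * E⁻¹) := fun R => rfl
  suffices f = f' by rwa [this]
  refine sum_powerset_injective fun R => ?_
  have hmul := hf'.mul isEGF_E R
  rw [mul_assoc, mul_comm _ E, E_mul_inv, mul_one, ← h R] at hmul
  simpa using hmul.symm

lemma eq_zero_of_sum_powerset_system [DecidableEq V] {a b a' b' x y : Finset V → ℚ}
    (hdet : (1 - a ∅) * (1 + b' ∅) + b ∅ * a' ∅ ≠ 0)
    (hx : ∀ R, x R = ∑ S ∈ R.powerset, (a S * x (R \ S) - b S * y (R \ S)))
    (hy : ∀ R, y R = ∑ S ∈ R.powerset, (a' S * x (R \ S) - b' S * y (R \ S))) (R : Finset V) :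
    x R = 0 ∧ y R = 0 := by
  induction R using Finset.strongInduction with
  | H R ih =>
    have hsum (p q : Finset V → ℚ) :
        ∑ S ∈ R.powerset, (p S * x (R \ S) - q S * y (R \ S)) = p ∅ * x R - q ∅ * y R := by
      rw [sum_eq_single_of_mem ∅ (empty_mem_powerset R), sdiff_empty]
      intro S hS hne
      obtain ⟨hxS, hyS⟩ :=
        ih (R \ S) (sdiff_ssubset (mem_powerset.1 hS) (nonempty_iff_ne_empty.2 hne))
      rw [hxS, hyS, mul_zero, mul_zero, sub_zero]
    have hxR := hx R
    have hyR := hy R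
    rw [hsum] at hxR hyR
    refine ⟨mul_left_cancel₀ hdet ?_, mul_left_cancel₀ hdet ?_⟩
    · linear_combination (1 + b' ∅) * hxR - b ∅ * hyR
    · linear_combination (1 - a ∅) * hyR + a' ∅ * hxR

lemma IsEGF.of_sum_powerset_system [DecidableEq V] {a b a' b' u u' x y : Finset V → ℚ}
    {A B A' B' U U' : PowerSeries ℚ} (ha : IsEGF a A) (hb : IsEGF b B) (ha' : IsEGF a' A')
    (hb' : IsEGF b' B') (hu : IsEGF u U) (hu' : IsEGF u' U')
    (hdet : PowerSeries.constantCoeff ((1 - A) * (1 + B') + B * A') ≠ 0)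
    (hx : ∀ R, x R = u R + ∑ S ∈ R.powerset, (a S * x (R \ S) - b S * y (R \ S)))
    (hy : ∀ R, y R = u' R + ∑ S ∈ R.powerset, (a' S * x (R \ S) - b' S * y (R \ S)))
    (hP : P = U + (A * P - B * Q)) (hQ : Q = U' + (A' * P - B' * Q)) :
    IsEGF x P ∧ IsEGF y Q := by
  set x' : Finset V → ℚ := fun R => (#R).factorial * PowerSeries.coeff #R P
  set y' : Finset V → ℚ := fun R => (#R).factorial * PowerSeries.coeff #R Q
  have hx' : IsEGF x' P := fun _ => rfl
  have hy' : IsEGF y' Q := fun _ => rfl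
  have hxP (R : Finset V) := hu.add ((ha.mul hx').sub (hb.mul hy')) R
  have hyQ (R : Finset V) := hu'.add ((ha'.mul hx').sub (hb'.mul hy')) R
  rw [← hP] at hxP
  rw [← hQ] at hyQ
  simp only [← sum_sub_distrib] at hxP hyQ
  have hempty {f : Finset V → ℚ} {P : PowerSeries ℚ} (hf : IsEGF f P) :
      f ∅ = PowerSeries.constantCoeff P := by simpa using hf ∅
  have hzero := eq_zero_of_sum_powerset_system (x := x - x') (y := y - y') (a := a) (b := b)
    (a' := a') (b' := b') (by simpa [hempty ha, hempty hb, hempty ha', hempty hb'] using hdet)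
    (fun R => ?_) (fun R => ?_)
  · have hxx' : x = x' := funext fun R => sub_eq_zero.1 (hzero R).1
    have hyy' : y = y' := funext fun R => sub_eq_zero.1 (hzero R).2
    exact ⟨hxx' ▸ hx', hyy' ▸ hy'⟩
  · rw [Pi.sub_apply, hx, ← show _ = x' R from hxP R, add_sub_add_left_eq_sub, ← sum_sub_distrib]
    exact sum_congr rfl fun S _ => by simp only [Pi.sub_apply]; ring
  · rw [Pi.sub_apply, hy, ← show _ = y' R from hyQ R, add_sub_add_left_eq_sub, ← sum_sub_distrib]
    exact sum_congr rfl fun S _ => by simp only [Pi.sub_apply]; ring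

lemma exists_powerSeries_system {K : Type*} [Field K] {A B A' B' : PowerSeries K}
    (hdet : PowerSeries.constantCoeff ((1 - A) * (1 + B') + B * A') ≠ 0) (U U' : PowerSeries K) :
    ∃ P Q, P = U + (A * P - B * Q) ∧ Q = U' + (A' * P - B' * Q) := by
  set D := (1 - A) * (1 + B') + B * A' with hD
  have hinv : D * D⁻¹ = 1 := PowerSeries.mul_inv_cancel D hdet
  refine ⟨D⁻¹ * ((1 + B') * U - B * U'), D⁻¹ * ((1 - A) * U' + A' * U), ?_, ?_⟩
  · linear_combination U * hinv - D⁻¹ * U * hD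
  · linear_combination U' * hinv - D⁻¹ * U' * hD

lemma isEGF_neg_one_pow_card : IsEGF (fun R : Finset V => (-1 : ℚ) ^ #R) E⁻¹ := by
  classical
  rw [← one_mul E⁻¹]
  refine IsEGF.of_sum_powerset ?_
  have hsum (R : Finset V) : ∑ S ∈ R.powerset, (-1 : ℚ) ^ #S = if R = ∅ then 1 else 0 := by
    exact_mod_cast sum_powerset_neg_one_pow_card (x := R)
  simpa only [hsum] using isEGF_one

lemma sum_powerset_sdiff_comm [DecidableEq V] {M : Type*} [AddCommMonoid M]
    (F : Finset V → Finset V → M) (R : Finset V) :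
    ∑ B ∈ R.powerset, F (R \ B) B = ∑ A ∈ R.powerset, F A (R \ A) := by
  refine sum_nbij' (R \ ·) (R \ ·) ?_ ?_ ?_ ?_ ?_ <;> simp +contextual

lemma sum_powerset_powerset_sdiff [DecidableEq V] {M : Type*} [AddCommMonoid M]
    (F : Finset V → Finset V → M) (R : Finset V) :
    ∑ S ∈ R.powerset, ∑ B ∈ S.powerset, F B (S \ B) =
      ∑ B ∈ R.powerset, ∑ T ∈ (R \ B).powerset, F B T := by
  rw [sum_sigma', sum_sigma']
  refine sum_bij' (fun x _ => ⟨x.2, x.1 \ x.2⟩) (fun x _ => ⟨x.1 ∪ x.2, x.1⟩) ?_ ?_ ?_ ?_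
    (fun _ _ => rfl) <;> simp only [mem_sigma, mem_powerset] <;> rintro ⟨S, B⟩ h
  · exact ⟨h.2.trans h.1, sdiff_subset_sdiff h.1 subset_rfl⟩
  · exact ⟨union_subset h.1 (h.2.trans sdiff_subset), subset_union_left⟩
  · rw [union_sdiff_of_subset h.2]
  · rw [union_sdiff_cancel_left (disjoint_sdiff.mono_right h.2)]

lemma IsEGF.sum_sub_one_pow [DecidableEq V] {w : Finset V → ℚ}
    (h : IsEGF (fun R => ∑ B ∈ R.powerset, w B ^ #(R \ B)) P) :
    IsEGF (fun R => ∑ B ∈ R.powerset, (w B - 1) ^ #(R \ B)) (P * E⁻¹) := by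
  refine IsEGF.of_sum_powerset ?_
  have hsum (R : Finset V) : ∑ S ∈ R.powerset, ∑ B ∈ S.powerset, (w B - 1) ^ #(S \ B) =
      ∑ B ∈ R.powerset, w B ^ #(R \ B) := by
    rw [sum_powerset_powerset_sdiff fun B T => (w B - 1) ^ #T]
    refine sum_congr rfl fun B _ => ?_
    simpa using sum_pow_mul_eq_add_pow (w B - 1) 1 (R \ B)
  simpa only [hsum] using h

lemma isEGF_Psi [DecidableEq V] :
    IsEGF (fun R : Finset V => ∑ B ∈ R.powerset, ((2 : ℚ) ^ #B) ^ #(R \ B)) Psi := by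
  intro R
  have hterm : ∀ B ∈ R.powerset, ((2 : ℚ) ^ #B) ^ #(R \ B) = (2 ^ #B) ^ (#R - #B) := by
    intro B hB
    rw [card_sdiff_of_subset (mem_powerset.1 hB)]
  beta_reduce
  rw [sum_congr rfl hterm, sum_powerset_apply_card fun j => ((2 : ℚ) ^ j) ^ (#R - j), Psi,
    PowerSeries.coeff_mk, Nat.sum_antidiagonal_eq_sum_range_succ fun i j =>
      (2 : ℚ) ^ (i * j) / (i.factorial * j.factorial), mul_sum]
  refine sum_congr rfl fun j hj => ?_
  rw [← Nat.choose_mul_factorial_mul_factorial (mem_range_succ_iff.1 hj), nsmul_eq_mul, pow_mul]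
  push_cast
  field_simp

end ExponentialGeneratingFunctions

section GapGraphs

open Finset

lemma card_filter_eq_sub {α : Type*} {s : Finset α} {p p' : α → Prop} [DecidablePred p]
    [DecidablePred p'] (h : ∀ x ∈ s, p' x ↔ ¬ p x) :
    (#{x ∈ s | p x} : ℚ) = #s - #{x ∈ s | p' x} := by
  rw [filter_congr h, ← card_filter_add_card_filter_not (s := s) p]
  push_cast
  ring

lemma card_filter_filter_eq_sub {α : Type*} {s : Finset α} {p p' q q' : α → Prop} [DecidablePred p]
    [DecidablePred p'] [DecidablePred q] [DecidablePred q'] (hp : ∀ x ∈ s, p' x ↔ ¬ p x)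
    (hq : ∀ x ∈ s, q' x ↔ ¬ q x) :
    (#{x ∈ {x ∈ s | p x} | q x} : ℚ) =
      #s - #{x ∈ s | p' x} - #{x ∈ s | q' x} + #{x ∈ {x ∈ s | p' x} | q' x} := by
  rw [card_filter_eq_sub fun x hx => hq x (mem_filter.1 hx).1, card_filter_eq_sub hp, filter_comm,
    card_filter_eq_sub fun x hx => hp x (mem_filter.1 hx).1, filter_comm]
  ring

variable {V : Type*} [Fintype V] [DecidableEq V]

/-- The bipartite graphs with sources in `A` and targets in `B`, encoded by the row `m a` of targets
of each vertex `a`, such that every row indexed by `A` satisfies `p`. -/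
def rowGraphs (A B : Finset V) (p : Finset V → Prop) [DecidablePred p] : Finset (V → Finset V) :=
  Fintype.piFinset fun a => if a ∈ A then {s ∈ B.powerset | p s} else {∅}

variable {A B : Finset V} {m : V → Finset V}

lemma mem_rowGraphs {p : Finset V → Prop} [DecidablePred p] :
    m ∈ rowGraphs A B p ↔ (∀ a ∈ A, m a ⊆ B ∧ p (m a)) ∧ ∀ a ∉ A, m a = ∅ := by
  rw [rowGraphs, Fintype.mem_piFinset, ← forall_and]
  refine forall_congr' fun a => ?_
  by_cases ha : a ∈ A <;> simp [ha]

lemma card_rowGraphs (A B : Finset V) (p : Finset V → Prop) [DecidablePred p] :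
    #(rowGraphs A B p) = #{s ∈ B.powerset | p s} ^ #A := by
  simp [rowGraphs, Fintype.card_piFinset, apply_ite card]

lemma filter_rowGraphs (A B : Finset V) (p q : Finset V → Prop) [DecidablePred p]
    [DecidablePred q] :
    {m ∈ rowGraphs A B p | ∀ a ∈ A, q (m a)} = rowGraphs A B fun s => p s ∧ q s := by
  ext m
  simp only [mem_filter, mem_rowGraphs]
  grind

lemma sum_card_rowGraphs_covering (A B : Finset V) (p : Finset V → Prop) [DecidablePred p] :
    ∑ C ∈ B.powerset, #{m ∈ rowGraphs A C p | ∀ b ∈ C, ∃ a, b ∈ m a} = #(rowGraphs A B p) := by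
  have hmaps : ∀ m ∈ rowGraphs A B p, univ.biUnion m ∈ B.powerset := by
    intro m hm
    rw [mem_rowGraphs] at hm
    rw [mem_powerset, biUnion_subset]
    grind
  rw [card_eq_sum_card_fiberwise hmaps]
  refine sum_congr rfl fun C hC => congrArg card ?_
  ext m
  have hrange : univ.biUnion m = C ↔ (∀ a, m a ⊆ C) ∧ ∀ b ∈ C, ∃ a, b ∈ m a := by
    rw [Subset.antisymm_iff, biUnion_subset]
    simp [subset_iff]
  rw [mem_powerset] at hC
  rw [mem_filter, mem_filter, hrange, mem_rowGraphs, mem_rowGraphs]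
  grind

lemma card_rowGraphs_covering_eq_compl (A B : Finset V) (p : Finset V → Prop) [DecidablePred p] :
    #{m ∈ rowGraphs A B p | ∀ b ∈ B, ∃ a, b ∈ m a} =
      #{m ∈ rowGraphs A B fun s => p (B \ s) | ∀ b ∈ B, ∃ a ∈ A, b ∉ m a} := by
  let compl (m : V → Finset V) (a : V) : Finset V := if a ∈ A then B \ m a else ∅
  have compl_compl {p : Finset V → Prop} [DecidablePred p] {m : V → Finset V}
      (hm : m ∈ rowGraphs A B p) : compl (compl m) = m := by
    rw [mem_rowGraphs] at hm
    funext a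
    by_cases ha : a ∈ A
    · simp [compl, ha, inter_eq_right.2 (hm.1 a ha).1]
    · simp [compl, ha, hm.2 a ha]
  refine card_nbij' compl compl ?_ ?_ (fun m hm => compl_compl (mem_filter.1 hm).1)
    (fun m hm => compl_compl (mem_filter.1 hm).1)
  all_goals
    intro m hm
    rw [mem_coe, mem_filter, mem_rowGraphs] at hm ⊢
    have hrow : ∀ a ∈ A, B \ (B \ m a) = m a := fun a ha =>
      Finset.sdiff_sdiff_eq_self (hm.1.1 a ha).1
    simp only [compl]
    grind

lemma card_rowGraphs_full_column (A B : Finset V) :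
    (#{m ∈ rowGraphs A B fun _ => True | ∃ b ∈ B, ∀ a ∈ A, b ∈ m a} : ℚ) =
      #(rowGraphs A B fun _ => True) -
        #{m ∈ rowGraphs A B fun _ => True | ∀ b ∈ B, ∃ a, b ∈ m a} := by
  rw [card_rowGraphs_covering_eq_compl]
  exact card_filter_eq_sub (by simp)

lemma card_rowGraphs_full_row (A B : Finset V) (p : Finset V → Prop) [DecidablePred p] :
    (#{m ∈ rowGraphs A B p | ∃ a ∈ A, B ⊆ m a} : ℚ) =
      #(rowGraphs A B p) - #(rowGraphs A B fun s => p s ∧ (B \ s).Nonempty) := by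
  rw [← filter_rowGraphs]
  exact card_filter_eq_sub (by simp [sdiff_nonempty])

lemma card_rowGraphs_full_column_full_row (A B : Finset V) :
    (#{m ∈ rowGraphs A B fun _ => True |
        (∃ b ∈ B, ∀ a ∈ A, b ∈ m a) ∧ ∃ a ∈ A, B ⊆ m a} : ℚ) =
      #(rowGraphs A B fun _ => True) - #{m ∈ rowGraphs A B fun _ => True | ∀ b ∈ B, ∃ a, b ∈ m a} -
        #(rowGraphs A B fun s => (B \ s).Nonempty) +
        #{m ∈ rowGraphs A B Finset.Nonempty | ∀ b ∈ B, ∃ a, b ∈ m a} := by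
  have hnonfull : {m ∈ rowGraphs A B fun _ => True | ∀ a ∈ A, (B \ m a).Nonempty} =
      rowGraphs A B fun s => (B \ s).Nonempty := by
    simpa only [true_and] using filter_rowGraphs A B (fun _ => True) fun s => (B \ s).Nonempty
  rw [← filter_filter, card_filter_filter_eq_sub (p' := fun m => ∀ b ∈ B, ∃ a ∈ A, b ∉ m a)
    (q' := fun m => ∀ a ∈ A, (B \ m a).Nonempty) (by simp) (by simp [sdiff_nonempty]),
    filter_comm, hnonfull, card_rowGraphs_covering_eq_compl, card_rowGraphs_covering_eq_compl]

lemma filter_full_column_rowGraphs_nonempty (A B : Finset V) :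
    {m ∈ rowGraphs A B Finset.Nonempty | ∃ b ∈ B, ∀ a ∈ A, b ∈ m a} =
      {m ∈ rowGraphs A B fun _ => True | ∃ b ∈ B, ∀ a ∈ A, b ∈ m a} := by
  ext m
  rw [mem_filter, mem_filter, mem_rowGraphs, mem_rowGraphs]
  grind

lemma isEGF_sum_card_rowGraphs :
    IsEGF (fun X : Finset V => ∑ B ∈ X.powerset, (#(rowGraphs (X \ B) B fun _ => True) : ℚ))
      Psi := by
  simpa [card_rowGraphs] using isEGF_Psi (V := V)

lemma isEGF_sum_card_rowGraphs_nonempty :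
    IsEGF (fun X : Finset V => ∑ B ∈ X.powerset, (#(rowGraphs (X \ B) B Finset.Nonempty) : ℚ))
      (Psi * E⁻¹) := by
  have hcard (B : Finset V) : (#{s ∈ B.powerset | s.Nonempty} : ℚ) = 2 ^ #B - 1 := by
    rw [show {s ∈ B.powerset | s.Nonempty} = B.powerset.erase ∅ by grind,
      cast_card_erase_of_mem (empty_mem_powerset B), card_powerset, Nat.cast_pow, Nat.cast_ofNat]
  simpa only [card_rowGraphs, Nat.cast_pow, hcard] using isEGF_Psi.sum_sub_one_pow

lemma isEGF_sum_card_rowGraphs_nonfull :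
    IsEGF (fun X : Finset V =>
      ∑ B ∈ X.powerset, (#(rowGraphs (X \ B) B fun s => (B \ s).Nonempty) : ℚ)) (Psi * E⁻¹) := by
  have hcard (B : Finset V) : (#{s ∈ B.powerset | (B \ s).Nonempty} : ℚ) = 2 ^ #B - 1 := by
    rw [show {s ∈ B.powerset | (B \ s).Nonempty} = B.powerset.erase B by
        simp only [sdiff_nonempty]; grind,
      cast_card_erase_of_mem (mem_powerset_self B), card_powerset, Nat.cast_pow, Nat.cast_ofNat]
  simpa only [card_rowGraphs, Nat.cast_pow, hcard] using isEGF_Psi.sum_sub_one_pow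

lemma isEGF_sum_card_rowGraphs_nonempty_nonfull :
    IsEGF (fun X : Finset V =>
      ∑ B ∈ X.powerset, (#(rowGraphs (X \ B) B fun s => s.Nonempty ∧ (B \ s).Nonempty) : ℚ))
      (Psi * E⁻¹ * E⁻¹ - E⁻¹ + 1) := by
  have hcard (B : Finset V) : (#{s ∈ B.powerset | s.Nonempty ∧ (B \ s).Nonempty} : ℚ) =
      if B = ∅ then 0 else 2 ^ #B - 1 - 1 := by
    split_ifs with hB
    · simp [hB]
    · rw [show {s ∈ B.powerset | s.Nonempty ∧ (B \ s).Nonempty} =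
          (B.powerset.erase ∅).erase B by simp only [sdiff_nonempty]; grind,
        cast_card_erase_of_mem (by simp [hB]), cast_card_erase_of_mem (empty_mem_powerset B),
        card_powerset, Nat.cast_pow, Nat.cast_ofNat]
  have hterm (X B : Finset V) :
      (#(rowGraphs (X \ B) B fun s => s.Nonempty ∧ (B \ s).Nonempty) : ℚ) =
        (2 ^ #B - 1 - 1) ^ #(X \ B) +
          if B = ∅ then (if X = ∅ then 1 else 0) - (-1) ^ #X else 0 := by
    rw [card_rowGraphs, Nat.cast_pow, hcard]
    rcases eq_or_ne B ∅ with rfl | hB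
    · rcases eq_or_ne X ∅ with rfl | hX <;> simp [*]
    · simp [hB]
  have hPsi := isEGF_Psi (V := V).sum_sub_one_pow.sum_sub_one_pow
  convert hPsi.add (isEGF_one.sub isEGF_neg_one_pow_card) using 1
  · funext X
    simp [hterm, sum_add_distrib]
  · ring

lemma IsEGF.card_rowGraphs_covering {p : Finset V → Prop} [DecidablePred p] {P : PowerSeries ℚ}
    (h : IsEGF (fun X : Finset V => ∑ B ∈ X.powerset, (#(rowGraphs (X \ B) B p) : ℚ)) P) :
    IsEGF (fun X : Finset V =>
      ∑ B ∈ X.powerset, (#{m ∈ rowGraphs (X \ B) B p | ∀ b ∈ B, ∃ a, b ∈ m a} : ℚ))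
      (P * E⁻¹) := by
  refine IsEGF.of_sum_powerset ?_
  convert h using 2 with X
  simp only [sum_powerset_sdiff_comm fun A B => (#(rowGraphs A B p) : ℚ),
    sum_powerset_sdiff_comm fun A B =>
      (#{m ∈ rowGraphs A B p | ∀ b ∈ B, ∃ a, b ∈ m a} : ℚ)]
  rw [sum_powerset_powerset_sdiff fun A B =>
    (#{m ∈ rowGraphs A B p | ∀ b ∈ B, ∃ a, b ∈ m a} : ℚ)]
  refine sum_congr rfl fun A _ => ?_
  exact_mod_cast sum_card_rowGraphs_covering A (X \ A) p

/-- The gap graphs on `X`, encoded by the row `m a` of targets of each vertex `a`: directed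
graphs supported on `X` in which no edge can be followed by another one. -/
def gapGraphs (X : Finset V) : Finset (V → Finset V) :=
  {m | ∀ a, ∀ b ∈ m a, a ∈ X ∧ b ∈ X ∧ m b = ∅}

variable {X : Finset V}

lemma mem_gapGraphs : m ∈ gapGraphs X ↔ ∀ a, ∀ b ∈ m a, a ∈ X ∧ b ∈ X ∧ m b = ∅ := by
  simp [gapGraphs]

lemma card_filter_gapGraphs (X : Finset V) (q : (V → Finset V) → Prop) [DecidablePred q] :
    #{m ∈ gapGraphs X | q m} =
      ∑ B ∈ X.powerset, #{m ∈ rowGraphs (X \ B) B Finset.Nonempty | q m} := by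
  have hmaps : ∀ m ∈ {m ∈ gapGraphs X | q m}, ({v ∈ X | m v = ∅} : Finset V) ∈ X.powerset :=
    fun m _ => mem_powerset.2 (filter_subset _ _)
  rw [card_eq_sum_card_fiberwise hmaps]
  refine sum_congr rfl fun B hB => congrArg card ?_
  ext m
  have hsinks : {v ∈ X | m v = ∅} = B ↔ ∀ v, v ∈ X ∧ m v = ∅ ↔ v ∈ B := by
    simp only [Finset.ext_iff, mem_filter]
  rw [mem_powerset] at hB
  rw [mem_filter, mem_filter, mem_filter, hsinks, mem_rowGraphs, mem_gapGraphs]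
  grind

/-- The graph `m` has a vertex which is a target of every vertex with an outgoing edge. -/
def HasUniversalTarget (m : V → Finset V) : Prop :=
  ∃ u, ∀ a, (m a).Nonempty → u ∈ m a

/-- The graph `m` on `X` has a vertex whose targets comprise all the vertices of `X` without
outgoing edges. -/
def HasUniversalSource (X : Finset V) (m : V → Finset V) : Prop :=
  ∃ d, ∀ u ∈ X, m u = ∅ → u ∈ m d

instance : DecidablePred (HasUniversalTarget (V := V)) := fun m =>
  inferInstanceAs (Decidable (∃ u, ∀ a, (m a).Nonempty → u ∈ m a))

instance (X : Finset V) : DecidablePred (HasUniversalSource X) := fun m =>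
  inferInstanceAs (Decidable (∃ d, ∀ u ∈ X, m u = ∅ → u ∈ m d))

lemma isEGF_card_gapGraphs :
    IsEGF (fun X : Finset V => (#(gapGraphs X) : ℚ)) (Psi * E⁻¹) := by
  convert isEGF_sum_card_rowGraphs_nonempty (V := V) with X
  exact_mod_cast by simpa using card_filter_gapGraphs X fun _ => True

lemma gapGraphs_empty : gapGraphs (∅ : Finset V) = {fun _ => ∅} := by
  ext m
  simp [mem_gapGraphs, funext_iff, eq_empty_iff_forall_notMem]

lemma isEGF_card_filter_gapGraphs {Q : Finset V → (V → Finset V) → Prop}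
    [∀ X, DecidablePred (Q X)] {w : Finset V → Finset V → ℚ} {P : PowerSeries ℚ}
    (hempty : Q ∅ fun _ => ∅) (hw_empty : w ∅ ∅ = 0)
    (hw : ∀ X B : Finset V, X.Nonempty → B ⊆ X →
      (#{m ∈ rowGraphs (X \ B) B Finset.Nonempty | Q X m} : ℚ) = w (X \ B) B)
    (h : IsEGF (fun X : Finset V => ∑ B ∈ X.powerset, w (X \ B) B) P) :
    IsEGF (fun X : Finset V => (#{m ∈ gapGraphs X | Q X m} : ℚ)) (1 + P) := by
  convert isEGF_one.add h using 2 with X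
  rcases X.eq_empty_or_nonempty with rfl | hX
  · simp [gapGraphs_empty, filter_singleton, hempty, hw_empty]
  · rw [card_filter_gapGraphs, Nat.cast_sum, if_neg hX.ne_empty, zero_add]
    exact sum_congr rfl fun B hB => hw X B hX (mem_powerset.1 hB)

lemma hasUniversalTarget_iff_full_column (hX : X.Nonempty)
    (hm : m ∈ rowGraphs (X \ B) B Finset.Nonempty) :
    HasUniversalTarget m ↔ ∃ b ∈ B, ∀ a ∈ X \ B, b ∈ m a := by
  obtain ⟨x, hx⟩ := hX
  rw [mem_rowGraphs] at hm
  constructor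
  · rintro ⟨u, hu⟩
    rcases (X \ B).eq_empty_or_nonempty with hA | ⟨a, ha⟩
    · exact ⟨x, sdiff_eq_empty_iff_subset.1 hA hx, by simp [hA]⟩
    · exact ⟨u, (hm.1 a ha).1 (hu a (hm.1 a ha).2), fun a' ha' => hu a' (hm.1 a' ha').2⟩
  · rintro ⟨b, -, hb⟩
    exact ⟨b, fun a ha => hb a (by_contra fun h => ha.ne_empty (hm.2 a h))⟩

lemma hasUniversalSource_iff_full_row (hX : X.Nonempty) (hBX : B ⊆ X)
    (hm : m ∈ rowGraphs (X \ B) B Finset.Nonempty) :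
    HasUniversalSource X m ↔ ∃ a ∈ X \ B, B ⊆ m a := by
  obtain ⟨x, hx⟩ := hX
  rw [mem_rowGraphs] at hm
  constructor
  · rintro ⟨d, hd⟩
    have hBd : B ⊆ m d := fun u hu => hd u (hBX hu) (hm.2 u (by simp [hu]))
    refine ⟨d, by_contra fun hdA => ?_, hBd⟩
    rw [hm.2 d hdA, subset_empty] at hBd
    obtain ⟨hmx, hne⟩ := hm.1 x (by simpa [hBd] using hx)
    exact hne.ne_empty (by simpa [hBd] using hmx)
  · rintro ⟨d, -, hBd⟩
    exact ⟨d, fun u hu hmu =>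
      hBd (by_contra fun huB => (hm.1 u (mem_sdiff.2 ⟨hu, huB⟩)).2.ne_empty hmu)⟩

lemma isEGF_card_hasUniversalTarget [Nonempty V] :
    IsEGF (fun X : Finset V => (#{m ∈ gapGraphs X | HasUniversalTarget m} : ℚ))
      (1 + Psi - Psi * E⁻¹) := by
  rw [show 1 + Psi - Psi * E⁻¹ = 1 + (Psi - Psi * E⁻¹) by ring]
  refine isEGF_card_filter_gapGraphs (Q := fun _ => HasUniversalTarget)
    (w := fun A B => #{m ∈ rowGraphs A B fun _ => True | ∃ b ∈ B, ∀ a ∈ A, b ∈ m a})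
    (by simp [HasUniversalTarget]) (by simp) ?_ ?_
  · intro X B hX _
    rw [filter_congr fun m hm => hasUniversalTarget_iff_full_column hX hm,
      filter_full_column_rowGraphs_nonempty]
  · simp only [card_rowGraphs_full_column, sum_sub_distrib]
    exact isEGF_sum_card_rowGraphs.sub isEGF_sum_card_rowGraphs.card_rowGraphs_covering

lemma isEGF_card_hasUniversalSource [Nonempty V] :
    IsEGF (fun X : Finset V => (#{m ∈ gapGraphs X | HasUniversalSource X m} : ℚ))
      (Psi * E⁻¹ - Psi * E⁻¹ * E⁻¹ + E⁻¹) := by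
  rw [show Psi * E⁻¹ - Psi * E⁻¹ * E⁻¹ + E⁻¹ =
      1 + (Psi * E⁻¹ - (Psi * E⁻¹ * E⁻¹ - E⁻¹ + 1)) by ring]
  refine isEGF_card_filter_gapGraphs (Q := fun X => HasUniversalSource X)
    (w := fun A B => #{m ∈ rowGraphs A B Finset.Nonempty | ∃ a ∈ A, B ⊆ m a})
    (by simp [HasUniversalSource]) (by simp) ?_ ?_
  · intro X B hX hBX
    rw [filter_congr fun m hm => hasUniversalSource_iff_full_row hX hBX hm]
  · simp only [card_rowGraphs_full_row, sum_sub_distrib]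
    exact isEGF_sum_card_rowGraphs_nonempty.sub isEGF_sum_card_rowGraphs_nonempty_nonfull

lemma isEGF_card_hasUniversalTarget_hasUniversalSource [Nonempty V] :
    IsEGF (fun X : Finset V =>
        (#{m ∈ gapGraphs X | HasUniversalTarget m ∧ HasUniversalSource X m} : ℚ))
      (1 + Psi - 2 * Psi * E⁻¹ + Psi * E⁻¹ * E⁻¹) := by
  rw [show 1 + Psi - 2 * Psi * E⁻¹ + Psi * E⁻¹ * E⁻¹ =
      1 + (Psi - Psi * E⁻¹ - Psi * E⁻¹ + Psi * E⁻¹ * E⁻¹) by ring]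
  refine isEGF_card_filter_gapGraphs
    (Q := fun X m => HasUniversalTarget m ∧ HasUniversalSource X m)
    (w := fun A B => #{m ∈ rowGraphs A B fun _ => True |
      (∃ b ∈ B, ∀ a ∈ A, b ∈ m a) ∧ ∃ a ∈ A, B ⊆ m a})
    (by simp [HasUniversalSource, HasUniversalTarget]) (by simp) ?_ ?_
  · intro X B hX hBX
    rw [filter_congr fun m hm => and_congr (hasUniversalTarget_iff_full_column hX hm)
        (hasUniversalSource_iff_full_row hX hBX hm), ← filter_filter,
      filter_full_column_rowGraphs_nonempty, filter_filter]
  · simp only [card_rowGraphs_full_column_full_row, sum_sub_distrib, sum_add_distrib]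
    exact ((isEGF_sum_card_rowGraphs.sub isEGF_sum_card_rowGraphs.card_rowGraphs_covering).sub
      isEGF_sum_card_rowGraphs_nonfull).add
      isEGF_sum_card_rowGraphs_nonempty.card_rowGraphs_covering

end GapGraphs

section LevelDiagrams

open Finset

/-- Data encoding a graded poset in which every element is below all the elements lying at least two
levels higher: the level of each element, counted from `1` and with `0` marking the labels which do
not occur, and for each element `a` the set `gap a` of elements of the next level not above `a`. -/
@[ext]
structure LevelDiagram (V : Type*) where
  level : V → ℕ
  gap : V → Finset V

namespace LevelDiagram

variable {V : Type*} {c : LevelDiagram V} {k i : ℕ} {R X : Finset V} {m : V → Finset V}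

/-- `c` is the diagram of a `3+1`-avoiding poset on `R` with at most `k` levels; `gap_eq_empty` is
where the avoidance of `3+1` enters. -/
structure IsDiagram (c : LevelDiagram V) (k : ℕ) (R : Finset V) : Prop where
  mem_iff : ∀ v, v ∈ R ↔ c.level v ≠ 0
  level_le : ∀ v, c.level v ≤ k
  level_ne_zero : ∀ a, ∀ b ∈ c.gap a, c.level a ≠ 0
  level_eq : ∀ a, ∀ b ∈ c.gap a, c.level b = c.level a + 1
  gap_eq_empty : ∀ a, ∀ b ∈ c.gap a, c.gap b = ∅

/-- No maximal chain skips the level `i`: between the elements `x` and `z` preceding and following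
this level in a chain fits some `y` of level `i`. As gaps only join consecutive levels, letting `x`
and `z` be arbitrary also takes care of the chains starting or ending at level `i`. -/
def IsComplete (c : LevelDiagram V) (i : ℕ) : Prop :=
  ∀ x z, ∃ y, c.level y = i ∧ y ∉ c.gap x ∧ z ∉ c.gap y

lemma IsDiagram.gap_eq_empty_of_level_eq (hc : c.IsDiagram k R) {v : V} (hv : c.level v = k) :
    c.gap v = ∅ :=
  eq_empty_of_forall_notMem fun b hb => by grind [hc.level_eq v b hb, hc.level_le b]

/-- The gaps below the level `k + 1`, starting from the level `k`. -/
def crownGap (k : ℕ) (c : LevelDiagram V) (a : V) : Finset V :=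
  if c.level a = k then c.gap a else ∅

section Fintype

variable [Fintype V]

/-- The crown of a diagram with `k + 1` levels: its top level and the elements of level `k` with a
gap above them. -/
def crown (k : ℕ) (c : LevelDiagram V) : Finset V :=
  {v | c.level v = k + 1 ∨ c.level v = k ∧ (c.gap v).Nonempty}

lemma mem_crown {v : V} :
    v ∈ crown k c ↔ c.level v = k + 1 ∨ c.level v = k ∧ (c.gap v).Nonempty := by
  simp [crown]

lemma crown_subset (hk : k ≠ 0) (hc : c.IsDiagram (k + 1) R) : crown k c ⊆ R := by
  intro v hv
  rw [hc.mem_iff]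
  rw [mem_crown] at hv
  lia

end Fintype

variable [DecidableEq V]

/-- The diagram obtained from `c`, with `k` levels, by adding the elements of `X` at the levels `k`
and `k + 1` in such a way that the gaps between them are given by `m`. -/
def glue (k : ℕ) (X : Finset V) (m : V → Finset V) (c : LevelDiagram V) : LevelDiagram V where
  level v := if v ∈ X then if (m v).Nonempty then k else k + 1 else c.level v
  gap a := m a ∪ c.gap a

lemma isComplete_glue_succ (hc : c.IsDiagram k (R \ X)) :
    (glue k X m c).IsComplete (k + 1) ↔ ¬ HasUniversalSource X m := by
  have hX := hc.mem_iff
  simp only [IsComplete, HasUniversalSource, glue]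
  push Not
  constructor
  · intro h d
    obtain ⟨y, hy⟩ := h d d
    have hlevel := hc.level_le y
    exact ⟨y, by grind⟩
  · intro h x z
    obtain ⟨u, hu⟩ := h x
    have hlevel := hc.level_eq x u
    have hlevel_ne_zero := hc.level_ne_zero u z
    exact ⟨u, by grind⟩

variable [Fintype V]

/-- The diagram which is left of `c` when its crown is removed. -/
def trunk (k : ℕ) (c : LevelDiagram V) : LevelDiagram V where
  level v := if v ∈ crown k c then 0 else c.level v
  gap a := if c.level a = k then ∅ else c.gap a

lemma isDiagram_glue (hk : k ≠ 0) (hXR : X ⊆ R) (hm : m ∈ gapGraphs X)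
    (hc : c.IsDiagram k (R \ X)) : (glue k X m c).IsDiagram (k + 1) R := by
  rw [mem_gapGraphs] at hm
  obtain ⟨mem_iff, level_le, level_ne_zero, level_eq, gap_eq_empty⟩ := hc
  constructor <;> simp only [glue] <;> grind

lemma crownGap_mem_gapGraphs (hc : c.IsDiagram (k + 1) R) :
    crownGap k c ∈ gapGraphs (crown k c) := by
  rw [mem_gapGraphs]
  simp only [mem_crown, crownGap]
  grind [hc.level_eq, hc.gap_eq_empty]

lemma isDiagram_trunk (hc : c.IsDiagram (k + 1) R) :
    (trunk k c).IsDiagram k (R \ crown k c) := by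
  obtain ⟨mem_iff, level_le, level_ne_zero, level_eq, gap_eq_empty⟩ := hc
  constructor <;> simp only [trunk, mem_sdiff, mem_crown] <;> grind

lemma glue_crown_trunk (k : ℕ) (c : LevelDiagram V) :
    glue k (crown k c) (crownGap k c) (trunk k c) = c := by
  ext v
  · simp only [glue, mem_crown, crownGap, trunk]
    grind
  · simp only [glue, crownGap, trunk]
    grind

lemma crown_glue (hm : m ∈ gapGraphs X) (hc : c.IsDiagram k (R \ X)) :
    crown k (glue k X m c) = X := by
  rw [mem_gapGraphs] at hm
  ext v
  have hlevel := hc.level_le v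
  have htop := hc.gap_eq_empty_of_level_eq (v := v)
  rw [mem_crown]
  by_cases hv : v ∈ X
  · by_cases hne : (m v).Nonempty <;> simp [glue, hv, hne]
  · simp only [glue, hv, if_false]
    grind

lemma crownGap_glue (hm : m ∈ gapGraphs X) (hc : c.IsDiagram k (R \ X)) :
    crownGap k (glue k X m c) = m := by
  have hX := hc.mem_iff
  rw [mem_gapGraphs] at hm
  ext v
  simp only [glue, crownGap]
  grind [hc.level_ne_zero, hc.gap_eq_empty_of_level_eq]

lemma trunk_glue (hm : m ∈ gapGraphs X) (hc : c.IsDiagram k (R \ X)) :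
    trunk k (glue k X m c) = c := by
  have hcrown := crown_glue hm hc
  have hX := hc.mem_iff
  rw [mem_gapGraphs] at hm
  ext v
  · simp only [trunk, hcrown]
    simp only [glue]
    grind
  · simp only [glue, trunk]
    grind [hc.level_ne_zero, hc.gap_eq_empty_of_level_eq]

/-- The diagrams of `3+1`-avoiding posets on `R` with at most `k` levels. -/
noncomputable def diagrams (k : ℕ) (R : Finset V) : Finset (LevelDiagram V) :=
  letI := Classical.decPred fun c : LevelDiagram V => c.IsDiagram k R
  {c ∈ (Fintype.piFinset (fun _ : V => range (k + 1)) ×ˢ univ).map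
    ⟨fun p => ⟨p.1, p.2⟩, fun p q h => by simpa [Prod.ext_iff] using h⟩ | c.IsDiagram k R}

lemma mem_diagrams : c ∈ diagrams k R ↔ c.IsDiagram k R := by
  simp only [diagrams, mem_filter, and_iff_right_iff_imp]
  intro hc
  rw [mem_map]
  exact ⟨(c.level, c.gap), by simpa [Nat.lt_succ_iff] using hc.level_le, rfl⟩

lemma sum_diagrams_succ {M : Type*} [AddCommMonoid M] (hk : k ≠ 0) (R : Finset V)
    (g : LevelDiagram V → M) :
    ∑ c ∈ diagrams (k + 1) R, g c =
      ∑ X ∈ R.powerset, ∑ m ∈ gapGraphs X, ∑ c ∈ diagrams k (R \ X), g (glue k X m c) := by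
  simp only [sum_sigma']
  refine sum_bij' (fun c _ => ⟨crown k c, crownGap k c, trunk k c⟩)
    (fun p _ => glue k p.1 p.2.1 p.2.2) ?_ ?_ ?_ ?_ ?_
  · intro c hc
    rw [mem_diagrams] at hc
    simp only [mem_sigma, mem_powerset, mem_diagrams]
    exact ⟨crown_subset hk hc, crownGap_mem_gapGraphs hc, isDiagram_trunk hc⟩
  · rintro ⟨X, m, c⟩ h
    simp only [mem_sigma, mem_powerset, mem_diagrams] at h ⊢
    exact isDiagram_glue hk h.1 h.2.1 h.2.2
  · intro c _
    exact glue_crown_trunk k c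
  · rintro ⟨X, m, c⟩ h
    simp only [mem_sigma, mem_powerset, mem_diagrams] at h
    simp only [crown_glue h.2.1 h.2.2, crownGap_glue h.2.1 h.2.2, trunk_glue h.2.1 h.2.2]
  · intro c _
    rw [glue_crown_trunk]

instance (c : LevelDiagram V) (i : ℕ) : Decidable (c.IsComplete i) :=
  inferInstanceAs (Decidable (∀ x z, ∃ y, c.level y = i ∧ y ∉ c.gap x ∧ z ∉ c.gap y))

lemma isComplete_glue_of_lt (hi : i ≠ 0) (hik : i < k) (hm : m ∈ gapGraphs X)
    (hc : c.IsDiagram k (R \ X)) : (glue k X m c).IsComplete i ↔ c.IsComplete i := by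
  rw [mem_gapGraphs] at hm
  have hX := hc.mem_iff
  refine forall₂_congr fun x z => exists_congr fun y => ?_
  simp only [glue]
  grind

lemma isComplete_glue_self (hk : k ≠ 0) (hm : m ∈ gapGraphs X)
    (hc : c.IsDiagram k (R \ X)) :
    (glue k X m c).IsComplete k ↔ (HasUniversalTarget m → c.IsComplete k) := by
  rw [mem_gapGraphs] at hm
  have hX := hc.mem_iff
  have htop := fun v => hc.gap_eq_empty_of_level_eq (v := v)
  simp only [IsComplete, HasUniversalTarget, glue]
  constructor
  · rintro h ⟨u, hu⟩ x z
    obtain ⟨y, hy⟩ := h x u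
    exact ⟨y, by grind⟩
  · intro h x z
    by_cases hu : ∃ u, ∀ a, (m a).Nonempty → u ∈ m a
    · obtain ⟨y, hy⟩ := h hu x z
      exact ⟨y, by grind⟩
    · push Not at hu
      obtain ⟨a, ha, hza⟩ := hu z
      obtain ⟨b, hb⟩ := ha
      exact ⟨a, by grind [hc.level_eq, hc.level_ne_zero]⟩

/-- The diagrams on `R` of which all the levels below `k` are nonempty and cannot be skipped. -/
noncomputable def layered (k : ℕ) (R : Finset V) : Finset (LevelDiagram V) :=
  {c ∈ diagrams k R | ∀ i < k, i ≠ 0 → c.IsComplete i}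

lemma forall_isComplete_glue_iff (hk : k ≠ 0) (hm : m ∈ gapGraphs X) (hc : c.IsDiagram k (R \ X)) :
    (∀ i < k + 1, i ≠ 0 → (glue k X m c).IsComplete i) ↔
      (∀ i < k, i ≠ 0 → c.IsComplete i) ∧ (HasUniversalTarget m → c.IsComplete k) := by
  rw [Nat.forall_lt_succ_right, isComplete_glue_self hk hm hc, imp_iff_right hk]
  exact and_congr_left' (forall₃_congr fun i hik hi => isComplete_glue_of_lt hi hik hm hc)

lemma sum_sum_ite_imp_and {α β : Type*} (s : Finset α) (t : Finset β) (p q : α → Prop)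
    (p' q' : β → Prop) [DecidablePred p] [DecidablePred q] [DecidablePred p'] [DecidablePred q'] :
    (∑ a ∈ s, ∑ b ∈ t, if (p' b ∧ (p a → q' b)) ∧ q a then 1 else 0 : ℚ) =
      #{a ∈ s | q a} * #{b ∈ t | p' b} - #{a ∈ s | p a ∧ q a} * #{b ∈ t | p' b ∧ ¬ q' b} := by
  simp only [natCast_card_filter, sum_mul_sum, ← sum_sub_distrib]
  refine sum_congr rfl fun a _ => sum_congr rfl fun b _ => ?_
  by_cases p a <;> by_cases q a <;> by_cases p' b <;> by_cases q' b <;> simp [*]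

lemma card_filter_layered_succ (hk : k ≠ 0) (R : Finset V) {q : LevelDiagram V → Prop}
    [DecidablePred q] {Q : Finset V → (V → Finset V) → Prop} [∀ X, DecidablePred (Q X)]
    (hq : ∀ X, ∀ m ∈ gapGraphs X, ∀ c : LevelDiagram V, c.IsDiagram k (R \ X) →
      (q (glue k X m c) ↔ Q X m)) :
    (#{c ∈ layered (k + 1) R | q c} : ℚ) = ∑ X ∈ R.powerset,
      (#{m ∈ gapGraphs X | Q X m} * #(layered k (R \ X)) -
        #{m ∈ gapGraphs X | HasUniversalTarget m ∧ Q X m} *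
          #{c ∈ layered k (R \ X) | ¬ c.IsComplete k} : ℚ) := by
  rw [layered, filter_filter, natCast_card_filter, sum_diagrams_succ hk]
  refine sum_congr rfl fun X _ => ?_
  rw [layered, filter_filter, ← sum_sum_ite_imp_and (gapGraphs X)]
  refine sum_congr rfl fun m hm => sum_congr rfl fun c hc => ?_
  rw [mem_diagrams] at hc
  simp only [forall_isComplete_glue_iff hk hm hc, hq X m hm c hc]

lemma layered_one (R : Finset V) :
    layered 1 R = {⟨fun v => if v ∈ R then 1 else 0, fun _ => ∅⟩} := by
  ext c
  rw [layered, mem_filter, mem_diagrams, mem_singleton, LevelDiagram.ext_iff]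
  constructor
  · rintro ⟨hc, -⟩
    refine ⟨funext fun v => ?_, funext fun v => eq_empty_of_forall_notMem fun b hb => ?_⟩
    · grind [hc.mem_iff v, hc.level_le v]
    · grind [hc.level_ne_zero v b hb, hc.level_eq v b hb, hc.level_le b]
  · rintro ⟨hlevel, hgap⟩
    refine ⟨⟨?_, ?_, ?_, ?_, ?_⟩, by lia⟩ <;> simp only [hlevel, hgap] <;> grind

lemma card_filter_not_isComplete_layered_one [Nonempty V] (R : Finset V) :
    #{c ∈ layered 1 R | ¬ c.IsComplete 1} = if R = ∅ then 1 else 0 := by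
  simp [layered_one, filter_singleton, IsComplete, eq_empty_iff_forall_notMem, apply_ite card]

lemma layered_eq_empty [Nonempty V] (hk : Fintype.card V + 1 < k) (R : Finset V) :
    layered k R = ∅ := by
  refine filter_eq_empty_iff.2 fun c _ hc => hk.not_ge ?_
  have hlevels : (range k).erase 0 ⊆ univ.image c.level := by
    intro i hi
    rw [mem_erase, mem_range] at hi
    obtain ⟨y, hy, -⟩ := hc i hi.2 hi.1 (Classical.arbitrary V) (Classical.arbitrary V)
    exact mem_image.2 ⟨y, mem_univ y, hy⟩
  have hcard := (card_le_card hlevels).trans card_image_le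
  rw [card_erase_of_mem (mem_range.2 (by lia)), card_range, card_univ] at hcard
  lia

/-- The number of layered diagrams on `R`, whatever the number of levels: this number is at most
`#V + 1`, only the last level being possibly empty. -/
noncomputable def layeredCount (R : Finset V) : ℚ :=
  ∑ k ∈ range (Fintype.card V + 1), #(layered (k + 1) R)

/-- The number of layered diagrams on `R` whose last level can be skipped. -/
noncomputable def incompleteCount (R : Finset V) : ℚ :=
  ∑ k ∈ range (Fintype.card V + 1), #{c ∈ layered (k + 1) R | ¬ c.IsComplete (k + 1)}

lemma sum_card_filter_layered [Nonempty V] (R : Finset V) {q : ℕ → LevelDiagram V → Prop}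
    [∀ k, DecidablePred (q k)] {Q : Finset V → (V → Finset V) → Prop} [∀ X, DecidablePred (Q X)]
    (hq : ∀ k X, ∀ m ∈ gapGraphs X, ∀ c : LevelDiagram V, c.IsDiagram k (R \ X) →
      (q (k + 1) (glue k X m c) ↔ Q X m)) :
    (∑ k ∈ range (Fintype.card V + 1), #{c ∈ layered (k + 1) R | q (k + 1) c} : ℚ) =
      #{c ∈ layered 1 R | q 1 c} + ∑ X ∈ R.powerset,
        (#{m ∈ gapGraphs X | Q X m} * layeredCount (R \ X) -
          #{m ∈ gapGraphs X | HasUniversalTarget m ∧ Q X m} * incompleteCount (R \ X)) := by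
  have hlast : #{c ∈ layered (Fintype.card V + 1 + 1) R | q (Fintype.card V + 1 + 1) c} = 0 := by
    simp [layered_eq_empty]
  rw [← add_zero (∑ k ∈ _, _), ← Nat.cast_zero, ← hlast,
    ← sum_range_succ (fun k => (#{c ∈ layered (k + 1) R | q (k + 1) c} : ℚ)), sum_range_succ',
    add_comm]
  simp only [layeredCount, incompleteCount, mul_sum, ← sum_sub_distrib]
  rw [sum_comm]
  exact congrArg _ (sum_congr rfl fun k _ => card_filter_layered_succ k.succ_ne_zero R (hq _))

lemma layeredCount_eq [Nonempty V] (R : Finset V) :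
    layeredCount R = 1 + ∑ X ∈ R.powerset, (#(gapGraphs X) * layeredCount (R \ X) -
      #{m ∈ gapGraphs X | HasUniversalTarget m} * incompleteCount (R \ X)) := by
  simpa [layeredCount, layered_one] using sum_card_filter_layered R (q := fun _ _ => True)
    (Q := fun _ _ => True) (by simp)

lemma incompleteCount_eq [Nonempty V] (R : Finset V) :
    incompleteCount R = (if R = ∅ then 1 else 0) + ∑ X ∈ R.powerset,
      (#{m ∈ gapGraphs X | HasUniversalSource X m} * layeredCount (R \ X) -
        #{m ∈ gapGraphs X | HasUniversalTarget m ∧ HasUniversalSource X m} *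
          incompleteCount (R \ X)) := by
  rw [incompleteCount, sum_card_filter_layered R (q := fun k c => ¬ c.IsComplete k)
    (Q := HasUniversalSource) fun k X m _ c hc => by rw [isComplete_glue_succ hc, not_not],
    card_filter_not_isComplete_layered_one]
  norm_cast

theorem exists_isEGF_layeredCount_incompleteCount : ∃ P Q : PowerSeries ℚ,
    P = E + (Psi * E⁻¹ * P - (1 + Psi - Psi * E⁻¹) * Q) ∧
    Q = 1 + ((Psi * E⁻¹ - Psi * E⁻¹ * E⁻¹ + E⁻¹) * P -
      (1 + Psi - 2 * Psi * E⁻¹ + Psi * E⁻¹ * E⁻¹) * Q) ∧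
    ∀ (V : Type*) [Fintype V] [DecidableEq V] [Nonempty V],
      IsEGF (layeredCount (V := V)) P ∧ IsEGF (incompleteCount (V := V)) Q := by
  have hdet : PowerSeries.constantCoeff
      ((1 - Psi * E⁻¹) * (1 + (1 + Psi - 2 * Psi * E⁻¹ + Psi * E⁻¹ * E⁻¹)) +
        (1 + Psi - Psi * E⁻¹) * (Psi * E⁻¹ - Psi * E⁻¹ * E⁻¹ + E⁻¹)) ≠ 0 := by
    simp [constantCoeff_E, constantCoeff_Psi]
  obtain ⟨P, Q, hP, hQ⟩ := exists_powerSeries_system hdet E 1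
  exact ⟨P, Q, hP, hQ, fun V _ _ _ => IsEGF.of_sum_powerset_system isEGF_card_gapGraphs
    isEGF_card_hasUniversalTarget isEGF_card_hasUniversalSource
    isEGF_card_hasUniversalTarget_hasUniversalSource isEGF_E isEGF_one hdet layeredCount_eq
    incompleteCount_eq hP hQ⟩

end LevelDiagram

end LevelDiagrams

section Posets

open Finset

variable {n i : ℕ} {r : Fin n → Fin n → Prop} {s t : Finset (Fin n)} {a b v : Fin n}

lemma relMaxChain_iff_maximal : RelMaxChain r s ↔ Maximal (RelChain r) s :=
  maximal_iff.symm

lemma RelChain.exists_relMaxChain (hs : RelChain r s) : ∃ t, s ⊆ t ∧ RelMaxChain r t := by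
  obtain ⟨t, hst, ht⟩ := Finite.exists_le_maximal hs
  exact ⟨t, hst, relMaxChain_iff_maximal.2 ht⟩

lemma RelChain.insert (hs : RelChain r s) (hv : ∀ x ∈ s, x ≠ v → r x v ∨ r v x) :
    RelChain r (insert v s) := by
  intro x hx y hy hxy
  grind [RelChain]

lemma relChain_singleton (r : Fin n → Fin n → Prop) (v : Fin n) : RelChain r {v} := by
  intro x hx y hy hxy
  grind

lemma relChain_pair (h : r a b) : RelChain r {a, b} :=
  (relChain_singleton r b).insert (by simp [h])

open Classical in
/-- The chains of elements below `v`. -/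
noncomputable def lowerChains (r : Fin n → Fin n → Prop) (v : Fin n) : Finset (Finset (Fin n)) :=
  {s | RelChain r s ∧ ∀ x ∈ s, r x v}

lemma mem_lowerChains : s ∈ lowerChains r v ↔ RelChain r s ∧ ∀ x ∈ s, r x v := by
  simp [lowerChains]

/-- The number of elements of a longest chain with greatest element `v`. -/
noncomputable def height (r : Fin n → Fin n → Prop) (v : Fin n) : ℕ :=
  (lowerChains r v).sup card + 1

lemma card_lt_height (hs : s ∈ lowerChains r v) : #s < height r v :=
  Nat.lt_succ_of_le (le_sup hs)

lemma exists_card_add_one_eq_height (r : Fin n → Fin n → Prop) (v : Fin n) :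
    ∃ s ∈ lowerChains r v, #s + 1 = height r v := by
  obtain ⟨s, hs, hsup⟩ := exists_mem_eq_sup (lowerChains r v)
    ⟨∅, mem_lowerChains.2 ⟨by simp [RelChain], by simp⟩⟩ card
  exact ⟨s, hs, by rw [height, hsup]⟩

lemma insert_mem_lowerChains (hr : IsStrictOrderRel r) (hs : s ∈ lowerChains r a) (hab : r a b) :
    Insert.insert a s ∈ lowerChains r b := by
  rw [mem_lowerChains] at hs ⊢
  refine ⟨hs.1.insert fun x hx _ => Or.inl (hs.2 x hx), forall_mem_insert _ _ _ |>.2 ⟨hab, ?_⟩⟩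
  exact fun x hx => hr.2 x a b (hs.2 x hx) hab

lemma height_lt_height (hr : IsStrictOrderRel r) (hab : r a b) : height r a < height r b := by
  obtain ⟨s, hs, hcard⟩ := exists_card_add_one_eq_height r a
  have ha : a ∉ s := fun ha => hr.1 a ((mem_lowerChains.1 hs).2 a ha)
  rw [← hcard, ← card_insert_of_notMem ha]
  exact card_lt_height (insert_mem_lowerChains hr hs hab)

lemma not_rel_of_height_le (hr : IsStrictOrderRel r) (h : height r b ≤ height r a) : ¬ r a b :=
  fun hab => h.not_gt (height_lt_height hr hab)

lemma RelChain.rel_of_height_lt (hr : IsStrictOrderRel r) (hs : RelChain r s) (ha : a ∈ s)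
    (hb : b ∈ s) (hab : height r a < height r b) : r a b :=
  (hs a ha b hb fun h => by simp [h] at hab).resolve_right
    (not_rel_of_height_le hr hab.le)

lemma RelChain.injOn {f : Fin n → ℕ} (hf : ∀ a b, r a b → f a < f b) (hs : RelChain r s) :
    Set.InjOn f s := by
  intro a ha b hb hab
  by_contra hne
  exact (hs a ha b hb hne).elim (fun h => (hf a b h).ne hab) fun h => (hf b a h).ne' hab

lemma height_le_card (hr : IsStrictOrderRel r) (hg : RelStronglyGraded r) (ht : RelMaxChain r t)
    (v : Fin n) : height r v ≤ #t := by
  obtain ⟨s, hs, hcard⟩ := exists_card_add_one_eq_height r v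
  rw [mem_lowerChains] at hs
  have hv : v ∉ s := fun hv => hr.1 v (hs.2 v hv)
  obtain ⟨t', hst, ht'⟩ := (hs.1.insert fun x hx _ => Or.inl (hs.2 x hx)).exists_relMaxChain
  rw [← hcard, ← card_insert_of_notMem hv, hg t t' ht ht']
  exact card_le_card hst

lemma exists_mem_height_eq (hr : IsStrictOrderRel r) (hg : RelStronglyGraded r)
    (ht : RelMaxChain r t) (hi : i ≠ 0) (hit : i ≤ #t) : ∃ y ∈ t, height r y = i := by
  have himage : t.image (height r) = Icc 1 #t := by
    refine eq_of_subset_of_card_le (fun j hj => ?_) ?_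
    · obtain ⟨v, -, rfl⟩ := mem_image.1 hj
      exact mem_Icc.2 ⟨Nat.succ_pos _, height_le_card hr hg ht v⟩
    · rw [Nat.card_Icc, Nat.add_sub_cancel,
        card_image_of_injOn (ht.1.injOn fun _ _ h => height_lt_height hr h)]
  exact mem_image.1 (himage ▸ mem_Icc.2 ⟨Nat.one_le_iff_ne_zero.2 hi, hit⟩)

lemma rel_of_height_add_two_le (hr : IsStrictOrderRel r) (hg : RelStronglyGraded r)
    (h31 : RelAvoids31 r) (hab : height r a + 2 ≤ height r b) : r a b := by
  obtain ⟨t, hbt, ht⟩ := (relChain_singleton r b).exists_relMaxChain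
  rw [singleton_subset_iff] at hbt
  have hb := height_le_card hr hg ht b
  obtain ⟨x, hx, hxa⟩ := exists_mem_height_eq hr hg ht (i := height r a) (by simp [height]) (by lia)
  obtain ⟨y, hy, hya⟩ := exists_mem_height_eq hr hg ht (i := height r a + 1) (by lia) (by lia)
  have hxy : r x y := ht.1.rel_of_height_lt hr hx hy (by lia)
  have hyb : r y b := ht.1.rel_of_height_lt hr hy hbt (by lia)
  by_contra hnab
  exact h31 ⟨a, x, y, b, hxy, hyb, ⟨not_rel_of_height_le hr hxa.le, not_rel_of_height_le hr hxa.ge⟩,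
    ⟨fun hay => hnab (hr.2 a y b hay hyb), not_rel_of_height_le hr (by lia)⟩, hnab,
    not_rel_of_height_le hr (by lia)⟩

lemma gCount_zero : gCount 0 = 1 := by
  simp [gCount, IsStrictOrderRel, RelStronglyGraded, RelAvoids31]

namespace LevelDiagram

open Classical in
/-- The levels and gaps of a relation, levels being heights. -/
noncomputable def ofRel (r : Fin n → Fin n → Prop) : LevelDiagram (Fin n) where
  level := height r
  gap a := {b | height r b = height r a + 1 ∧ ¬ r a b}

lemma level_ofRel (r : Fin n → Fin n → Prop) : (ofRel r).level = height r := rfl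

lemma mem_gap_ofRel : b ∈ (ofRel r).gap a ↔ height r b = height r a + 1 ∧ ¬ r a b := by
  simp [ofRel]

lemma gap_ofRel_eq_empty (hr : IsStrictOrderRel r) (hg : RelStronglyGraded r)
    (h31 : RelAvoids31 r) (hb : b ∈ (ofRel r).gap a) : (ofRel r).gap b = ∅ := by
  refine eq_empty_of_forall_notMem fun d hd => ?_
  rw [mem_gap_ofRel] at hb hd
  have had : r a d := rel_of_height_add_two_le hr hg h31 (by lia)
  obtain ⟨t, hadt, ht⟩ := (relChain_pair had).exists_relMaxChain
  rw [insert_subset_iff, singleton_subset_iff] at hadt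
  have hle := height_le_card hr hg ht d
  obtain ⟨y, hy, hyb⟩ := exists_mem_height_eq hr hg ht (i := height r b) (by lia) (by lia)
  exact h31 ⟨b, a, y, d, ht.1.rel_of_height_lt hr hadt.1 hy (by lia),
    ht.1.rel_of_height_lt hr hy hadt.2 (by lia), ⟨not_rel_of_height_le hr (by lia), hb.2⟩,
    ⟨not_rel_of_height_le hr hyb.le, not_rel_of_height_le hr hyb.ge⟩, hd.2,
    not_rel_of_height_le hr (by lia)⟩

lemma isComplete_ofRel (hr : IsStrictOrderRel r) (hg : RelStronglyGraded r) (h31 : RelAvoids31 r)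
    (ht : RelMaxChain r t) (hi : i ≠ 0) (hit : i ≤ #t) : (ofRel r).IsComplete i := by
  intro x z
  let s : Finset (Fin n) := {v ∈ {x, z} | v = x ∧ height r x + 1 = i ∨ v = z ∧ height r z = i + 1}
  have hs : RelChain r s := by
    have hxz : height r x + 1 = i → height r z = i + 1 → r x z := fun hx hz =>
      rel_of_height_add_two_le hr hg h31 (by lia)
    intro v hv w hw hvw
    grind
  obtain ⟨t', hst, ht'⟩ := hs.exists_relMaxChain
  obtain ⟨y, hy, rfl⟩ := exists_mem_height_eq hr hg ht' hi (hg t t' ht ht' ▸ hit)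
  refine ⟨y, rfl, fun hyx => ?_, fun hzy => ?_⟩
  · rw [mem_gap_ofRel] at hyx
    exact hyx.2 (ht'.1.rel_of_height_lt hr (hst (by grind)) hy (by lia))
  · rw [mem_gap_ofRel] at hzy
    exact hzy.2 (ht'.1.rel_of_height_lt hr hy (hst (by grind)) (by lia))

/-- `c` is the diagram of a strongly graded `3+1`-avoiding poset with `k` levels. -/
def IsGraded {V : Type*} [Fintype V] (c : LevelDiagram V) (k : ℕ) : Prop :=
  c.IsDiagram k univ ∧ ∀ i ≤ k, i ≠ 0 → c.IsComplete i

lemma exists_isGraded_ofRel (hr : IsStrictOrderRel r) (hg : RelStronglyGraded r)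
    (h31 : RelAvoids31 r) : ∃ k, (ofRel r).IsGraded k := by
  obtain ⟨t, -, ht⟩ := RelChain.exists_relMaxChain (r := r) (s := ∅) (by simp [RelChain])
  have level_ne_zero (v : Fin n) : (ofRel r).level v ≠ 0 := Nat.succ_ne_zero _
  exact ⟨#t,
    { mem_iff := by simp [level_ne_zero]
      level_le := height_le_card hr hg ht
      level_ne_zero := fun a _ _ => level_ne_zero a
      level_eq := fun a b hb => (mem_gap_ofRel.1 hb).1
      gap_eq_empty := fun a b hb => gap_ofRel_eq_empty hr hg h31 hb },
    fun i hit hi => isComplete_ofRel hr hg h31 ht hi hit⟩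

/-- The strict order encoded by a diagram. -/
def rel {V : Type*} (c : LevelDiagram V) (a b : V) : Prop :=
  c.level a < c.level b ∧ b ∉ c.gap a

lemma rel_ofRel (hr : IsStrictOrderRel r) (hg : RelStronglyGraded r) (h31 : RelAvoids31 r) :
    (ofRel r).rel = r := by
  ext a b
  rw [rel, mem_gap_ofRel, level_ofRel]
  refine ⟨fun h => ?_, fun hab => ⟨height_lt_height hr hab, fun h => h.2 hab⟩⟩
  by_contra hab
  exact hab (rel_of_height_add_two_le hr hg h31 (by grind))

variable {c : LevelDiagram (Fin n)} {k : ℕ} {R : Finset (Fin n)}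

lemma IsDiagram.isStrictOrderRel_rel (hc : c.IsDiagram k R) : IsStrictOrderRel c.rel := by
  refine ⟨fun a ha => ha.1.false, fun a b d hab hbd => ⟨hab.1.trans hbd.1, fun hd => ?_⟩⟩
  have := hc.level_eq a d hd
  have := hab.1
  have := hbd.1
  lia

lemma IsDiagram.relAvoids31_rel (hc : c.IsDiagram k R) : RelAvoids31 c.rel := by
  rintro ⟨w, x, y, z, hxy, hyz, ⟨-, hxw⟩, -, ⟨hwz, hzw⟩⟩
  have hxz : c.level x + 2 ≤ c.level z := Nat.lt_of_le_of_lt hxy.1 hyz.1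
  have hlevel := hc.level_eq
  have hgap := hc.gap_eq_empty
  simp only [rel] at *
  grind

lemma IsGraded.exists_mem_level_eq [NeZero n] (hc : c.IsGraded k) (hs : RelMaxChain c.rel s)
    (hik : i ≤ k) (hi : i ≠ 0) : ∃ y ∈ s, c.level y = i := by
  have exists_eq (j : ℕ) : ∃ x, ∀ v ∈ s, c.level v = j → v = x := by
    by_cases! hj : ∃ x ∈ s, c.level x = j
    · obtain ⟨x, hx, rfl⟩ := hj
      exact ⟨x, fun v hv => hs.1.injOn (fun _ _ h => h.1) hv hx⟩
    · exact ⟨0, fun v hv h => absurd h (hj v hv)⟩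
  obtain ⟨x, hx⟩ := exists_eq (i - 1)
  obtain ⟨z, hz⟩ := exists_eq (i + 1)
  obtain ⟨y, hy, hyx, hzy⟩ := hc.2 i hik hi x z
  by_contra! hne
  have hins : RelChain c.rel (insert y s) := hs.1.insert fun v hv _ => by
    have hv' := hne v hv
    have := hx v hv
    have := hz v hv
    have := hc.1.level_eq v y
    have := hc.1.level_eq y v
    simp only [rel]
    grind
  exact hne y (hs.2 _ hins (subset_insert y s) ▸ mem_insert_self y s) hy

lemma IsGraded.image_level [NeZero n] (hc : c.IsGraded k) (hs : RelMaxChain c.rel s) :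
    s.image c.level = Icc 1 k := by
  ext i
  rw [mem_image, mem_Icc, Nat.one_le_iff_ne_zero]
  constructor
  · rintro ⟨v, -, rfl⟩
    exact ⟨(hc.1.mem_iff v).1 (mem_univ v), hc.1.level_le v⟩
  · exact fun h => hc.exists_mem_level_eq hs h.2 h.1

lemma IsGraded.card_eq [NeZero n] (hc : c.IsGraded k) (hs : RelMaxChain c.rel s) : #s = k := by
  rw [← card_image_of_injOn (hs.1.injOn fun _ _ h => h.1), hc.image_level hs, Nat.card_Icc,
    Nat.add_sub_cancel]

lemma IsGraded.relStronglyGraded_rel [NeZero n] (hc : c.IsGraded k) : RelStronglyGraded c.rel :=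
  fun s t hs ht => by rw [hc.card_eq hs, hc.card_eq ht]

lemma IsGraded.height_rel [NeZero n] (hc : c.IsGraded k) : height c.rel = c.level := by
  ext v
  have hv : c.level v ≠ 0 := (hc.1.mem_iff v).1 (mem_univ v)
  have hcard : #(Ico 1 (c.level v)) + 1 = c.level v := by
    rw [Nat.card_Ico]
    lia
  apply le_antisymm
  · obtain ⟨s, hs, hsv⟩ := exists_card_add_one_eq_height c.rel v
    rw [mem_lowerChains] at hs
    rw [← hsv, ← hcard, ← card_image_of_injOn (hs.1.injOn fun _ _ h => h.1)]
    refine Nat.add_le_add_right (card_le_card (image_subset_iff.2 fun x hx => ?_)) 1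
    exact mem_Ico.2 ⟨Nat.one_le_iff_ne_zero.2 ((hc.1.mem_iff x).1 (mem_univ x)), (hs.2 x hx).1⟩
  · obtain ⟨t, hvt, ht⟩ := (relChain_singleton c.rel v).exists_relMaxChain
    rw [singleton_subset_iff] at hvt
    have hlower : {x ∈ t | c.level x < c.level v} ∈ lowerChains c.rel v := by
      refine mem_lowerChains.2 ⟨fun x hx y hy => ht.1 x (mem_of_mem_filter x hx) y
        (mem_of_mem_filter y hy), fun x hx => ?_⟩
      obtain ⟨hxt, hxv⟩ := mem_filter.1 hx
      exact (ht.1 x hxt v hvt (by grind)).resolve_right fun h => hxv.not_gt h.1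
    have hsub : Ico 1 (c.level v) ⊆ {x ∈ t | c.level x < c.level v}.image c.level := by
      intro i hi
      rw [mem_Ico] at hi
      obtain ⟨y, hy, rfl⟩ := hc.exists_mem_level_eq ht
        (hi.2.le.trans (hc.1.level_le v)) (Nat.one_le_iff_ne_zero.1 hi.1)
      exact mem_image_of_mem _ (mem_filter.2 ⟨hy, hi.2⟩)
    rw [← hcard]
    exact ((card_le_card hsub).trans card_image_le).trans_lt (card_lt_height hlower)

lemma IsGraded.ofRel_rel [NeZero n] (hc : c.IsGraded k) : ofRel c.rel = c := by
  ext a b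
  · rw [level_ofRel, hc.height_rel]
  · rw [mem_gap_ofRel, hc.height_rel, rel]
    have := hc.1.level_eq a b
    grind

lemma gCount_eq_card_isGraded [NeZero n] :
    gCount n = Nat.card {c : LevelDiagram (Fin n) // ∃ k, c.IsGraded k} :=
  Nat.card_congr
    { toFun r := ⟨ofRel r.1, exists_isGraded_ofRel r.2.1 r.2.2.1 r.2.2.2⟩
      invFun c := ⟨c.1.rel, by
        obtain ⟨c, k, hc⟩ := c
        exact ⟨hc.1.isStrictOrderRel_rel, hc.relStronglyGraded_rel, hc.1.relAvoids31_rel⟩⟩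
      left_inv r := Subtype.ext (rel_ofRel r.2.1 r.2.2.1 r.2.2.2)
      right_inv c := by
        obtain ⟨c, k, hc⟩ := c
        exact Subtype.ext hc.ofRel_rel }

lemma isGraded_succ_iff : c.IsGraded (k + 1) ↔ c ∈ layered (k + 1) univ ∧ c.IsComplete (k + 1) := by
  rw [IsGraded, layered, mem_filter, mem_diagrams, and_assoc]
  refine and_congr_right' ⟨fun h => ⟨fun i hi => h i hi.le, h _ le_rfl k.succ_ne_zero⟩, ?_⟩
  rintro ⟨hlt, hlast⟩ i hi hi0
  rcases hi.lt_or_eq with hi | rfl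
  exacts [hlt i hi hi0, hlast]

lemma IsGraded.le [NeZero n] {l : ℕ} (hk : c.IsGraded k) (hl : c.IsGraded l) : l ≤ k := by
  rcases eq_or_ne l 0 with rfl | hl0
  · exact k.zero_le
  · obtain ⟨y, hy, -⟩ := hl.2 l le_rfl hl0 0 0
    exact hy ▸ hk.1.level_le y

lemma IsGraded.ne_zero [NeZero n] (hc : c.IsGraded k) : k ≠ 0 := by
  rintro rfl
  exact (hc.1.mem_iff 0).1 (mem_univ 0) (Nat.le_zero.1 (hc.1.level_le 0))

lemma gCount_eq_sum [NeZero n] : gCount n =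
    ∑ k ∈ range (n + 1), #{c ∈ layered (k + 1) (univ : Finset (Fin n)) | c.IsComplete (k + 1)} := by
  classical
  rw [gCount_eq_card_isGraded, ← card_biUnion]
  · refine Nat.subtype_card _ fun c => ?_
    simp only [mem_biUnion, mem_filter, mem_range, ← isGraded_succ_iff]
    refine ⟨fun ⟨k, _, hc⟩ => ⟨k + 1, hc⟩, fun ⟨k, hc⟩ => ?_⟩
    obtain ⟨k, rfl⟩ := Nat.exists_eq_succ_of_ne_zero hc.ne_zero
    refine ⟨k, not_le.1 fun hk => ?_, hc⟩
    have hmem := (isGraded_succ_iff.1 hc).1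
    rw [layered_eq_empty (by simpa using hk)] at hmem
    exact notMem_empty c hmem
  · intro k _ l _ hkl
    refine disjoint_left.2 fun c hk hl => hkl ?_
    rw [mem_filter, ← isGraded_succ_iff] at hk hl
    exact Nat.succ_injective ((hl.le hk).antisymm (hk.le hl))

lemma gCount_eq_sub [NeZero n] :
    (gCount n : ℚ) = layeredCount (V := Fin n) univ - incompleteCount (V := Fin n) univ := by
  rw [gCount_eq_sum, layeredCount, incompleteCount, ← sum_sub_distrib, Fintype.card_fin,
    Nat.cast_sum]
  exact sum_congr rfl fun k _ => card_filter_eq_sub fun _ _ => Iff.rfl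

lemma G_sub_one_eq {P Q : PowerSeries ℚ}
    (h0 : PowerSeries.constantCoeff P = PowerSeries.constantCoeff Q)
    (hPQ : ∀ (n : ℕ) [NeZero n],
      IsEGF (layeredCount (V := Fin n)) P ∧ IsEGF (incompleteCount (V := Fin n)) Q) :
    G - 1 = P - Q := by
  ext n
  rcases eq_or_ne n 0 with rfl | hn
  · simp [G, gCount_zero, h0]
  · have : NeZero n := ⟨hn⟩
    have hP := (hPQ n).1 univ
    have hQ := (hPQ n).2 univ
    rw [card_univ, Fintype.card_fin] at hP hQ
    rw [map_sub, map_sub, PowerSeries.coeff_one, if_neg hn, sub_zero, G, PowerSeries.coeff_mk,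
      gCount_eq_sub, hP, hQ]
    field_simp

end LevelDiagram

end Posets

theorem strongly_graded_gf :
    (G - 1) * (E * (2 * E + 1) + (E ^ 2 - 2 * E - 1) * Psi) =
      E ^ 2 * (2 * E - 3) + E * (E - 2) ^ 2 * Psi := by
  obtain ⟨P, Q, hP, hQ, hPQ⟩ := LevelDiagram.exists_isEGF_layeredCount_incompleteCount
  have hP0 := congrArg PowerSeries.constantCoeff hP
  have hQ0 := congrArg PowerSeries.constantCoeff hQ
  simp only [map_add, map_mul, map_sub, PowerSeries.constantCoeff_inv, map_one, map_ofNat,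
    constantCoeff_E, constantCoeff_Psi] at hP0 hQ0
  rw [LevelDiagram.G_sub_one_eq (by linarith) fun n _ => hPQ (Fin n)]
  -- Cramer's rule for `hP` and `hQ`; the multiple of `E_mul_inv` clears the powers of `E⁻¹`.
  linear_combination E ^ 2 * ((2 + Psi - 3 * Psi * E⁻¹ + 2 * Psi * E⁻¹ * E⁻¹ - E⁻¹) * hP -
    (2 + Psi - 2 * Psi * E⁻¹) * hQ) + ((P - Q) * (2 * E * Psi - E + Psi * (E * E⁻¹ + 1)) +
      2 * E * Psi * (E * E⁻¹ + 2) - E ^ 2 - 3 * E ^ 2 * Psi) * E_mul_inv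
end

section
/- Let w_n denote the number of strict partial order relations on {1, …, n} that are weakly graded and avoid 3+1, and let W(x) = Σ_{n ≥ 0} w_n x^n/n! as a formal power series over ℚ. Then (W(x) − (e^{−x} − 1)·Ψ(x))·(e^x(2e^x + 1) + (e^{2x} − 2e^x − 1)·Ψ(x)) = 2e^{3x} + e^{2x}(e^x − 2)·Ψ(x), where Ψ(x) = Σ_{m,n ≥ 0} 2^{mn} x^{m+n}/(m! n!) and e^x is the exponential power series. Equivalently, W(x) = (e^{−x} − 1)Ψ(x) + (2e^{3x} + e^{2x}(e^x − 2)Ψ(x)) / (e^x(2e^x + 1) + (e^{2x} − 2e^x − 1)Ψ(x)). -/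
/-- `e^{-x} = Σ_{k ≥ 0} (-1)^k x^k / k!`. -/
noncomputable def ExpNeg : PowerSeries ℚ :=
  PowerSeries.mk fun k => (-1 : ℚ) ^ k / k.factorial

/-- the egf of weakly graded `3+1`-avoiding posets. -/
noncomputable def W : PowerSeries ℚ :=
  PowerSeries.mk fun n => (wCount n : ℚ) / n.factorial

/-! In a weakly graded order that avoids `3+1` and has a chain of three elements, any two elements
at least two ranks apart are comparable. Such an order is therefore determined by its rank function
and the graph of incomparable pairs on consecutive ranks. In this graph no edge continues another,
so the edges between consecutive ranks form bipartite graphs on disjoint vertex sets. Conversely,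
ranks and graphs of this kind come from an order unless some element of rank `i` and some element of
rank `i + 2` have nothing between them. That happens exactly when all elements of rank `i + 1` are
covered by the graph, the edges leaving rank `i` contain a full row and those leaving rank `i + 1`
contain a full column: a condition on two adjacent bipartite graphs.

Removing the bottom bipartite graph hence gives a transfer recursion in which only the presence of a
full row or a full column matters, that is, a linear system over the exponential generating
functions. Complementing bipartite graphs expresses its coefficients by `Psi` and `E`. The orders
without a chain of three elements are bipartite graphs with isolated vertices, counted by
`ExpNeg * Psi`. -/

namespace WeaklyGraded

open Finset PowerSeries
open scoped Nat

/-- A family of numbers indexed by the finite subsets of `α`. Power series act on such families as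
exponential generating functions: `P • c` distributes a set over a part counted by `P` and a part
counted by `c`. -/
def SetFunction (α : Type*) : Type _ := Finset α → ℚ

namespace SetFunction

variable {α : Type*}

noncomputable instance : AddCommGroup (SetFunction α) :=
  inferInstanceAs (AddCommGroup (Finset α → ℚ))

@[simp] protected lemma add_apply (c d : SetFunction α) (S : Finset α) :
    (c + d) S = c S + d S := rfl

@[simp] protected lemma sub_apply (c d : SetFunction α) (S : Finset α) :
    (c - d) S = c S - d S := rfl

@[simp] protected lemma zero_apply (S : Finset α) : (0 : SetFunction α) S = 0 := rfl

@[ext] protected lemma ext {c d : SetFunction α} (h : ∀ S, c S = d S) : c = d := funext h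

variable [DecidableEq α]

noncomputable instance : SMul ℚ⟦X⟧ (SetFunction α) where
  smul P c S := ∑ T ∈ S.powerset, (#T)! * coeff #T P * c (S \ T)

protected lemma smul_apply (P : ℚ⟦X⟧) (c : SetFunction α) (S : Finset α) :
    (P • c) S = ∑ T ∈ S.powerset, (#T)! * coeff #T P * c (S \ T) := rfl

/-- The indicator of the empty set, so that `P • delta` is the family with exponential generating
function `P`. -/
def delta : SetFunction α := fun S => if S = ∅ then 1 else 0

@[simp] lemma delta_empty : (delta : SetFunction α) ∅ = 1 := rfl

lemma delta_of_nonempty {S : Finset α} (hS : S.Nonempty) : (delta : SetFunction α) S = 0 :=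
  if_neg hS.ne_empty

lemma smul_delta_apply (P : ℚ⟦X⟧) (S : Finset α) :
    (P • (delta : SetFunction α)) S = (#S)! * coeff #S P := by
  rw [SetFunction.smul_apply, sum_eq_single_of_mem S (mem_powerset_self S)]
  · simp
  · intro T hT hne
    rw [delta_of_nonempty, mul_zero]
    exact sdiff_nonempty.2 fun h => hne (subset_antisymm (mem_powerset.1 hT) h)

lemma sum_powerset_card_card_sdiff (f : ℕ → ℕ → ℚ) (S : Finset α) :
    ∑ T ∈ S.powerset, f #T #(S \ T) =
      (#S)! * ∑ p ∈ antidiagonal #S, f p.1 p.2 / (p.1! * p.2!) := by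
  have card_compl : ∀ T ∈ S.powerset, f #T #(S \ T) = f #T (#S - #T) := fun T hT => by
    rw [card_sdiff_of_subset (mem_powerset.1 hT)]
  rw [sum_congr rfl card_compl, sum_powerset_apply_card fun m => f m (#S - m),
    Nat.sum_antidiagonal_eq_sum_range_succ_mk, mul_sum]
  refine sum_congr rfl fun m hm => ?_
  rw [nsmul_eq_mul, Nat.cast_choose ℚ (Nat.lt_succ_iff.1 (mem_range.1 hm))]
  field_simp

lemma mul_smul_delta_apply (P Q : ℚ⟦X⟧) (S : Finset α) :
    ((P * Q) • (delta : SetFunction α)) S =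
      ∑ T ∈ S.powerset, (#T)! * coeff #T P * ((#(S \ T))! * coeff #(S \ T) Q) := by
  rw [sum_powerset_card_card_sdiff fun m n => m ! * coeff m P * (n ! * coeff n Q),
    smul_delta_apply, coeff_mul]
  congr 1
  refine sum_congr rfl fun p _ => ?_
  have := p.1.factorial_ne_zero
  have := p.2.factorial_ne_zero
  field_simp

protected lemma mul_smul (P Q : ℚ⟦X⟧) (c : SetFunction α) : (P * Q) • c = P • Q • c := by
  ext S
  simp only [SetFunction.smul_apply, mul_sum]
  have expand : ∀ T ∈ S.powerset, (#T)! * coeff #T (P * Q) * c (S \ T) =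
      ∑ U ∈ T.powerset,
        (#U)! * coeff #U P * ((#(T \ U))! * coeff #(T \ U) Q * c (S \ T)) := fun T _ => by
    rw [← smul_delta_apply, mul_smul_delta_apply, sum_mul]
    exact sum_congr rfl fun U _ => by ring
  rw [sum_congr rfl expand, sum_sigma', sum_sigma']
  refine sum_bij' (fun p _ => ⟨p.2, p.1 \ p.2⟩) (fun p _ => ⟨p.1 ∪ p.2, p.1⟩) ?_ ?_ ?_ ?_ ?_
  all_goals
    rintro ⟨T, U⟩ h
    simp only [mem_sigma, mem_powerset] at h ⊢
  · exact ⟨h.2.trans h.1, sdiff_subset_sdiff h.1 subset_rfl⟩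
  · exact ⟨union_subset h.1 (h.2.trans sdiff_subset), subset_union_left⟩
  · simp [h.2]
  · simp [union_sdiff_cancel_left (disjoint_sdiff.mono_right h.2)]
  · rw [sdiff_sdiff_left, sup_eq_union, union_sdiff_of_subset h.2]

noncomputable instance : Module ℚ⟦X⟧ (SetFunction α) where
  one_smul c := by
    ext S
    rw [SetFunction.smul_apply, sum_eq_single_of_mem ∅ (empty_mem_powerset S)]
    · simp
    · intro T _ hT
      simp [coeff_one, hT]
  mul_smul := SetFunction.mul_smul
  smul_zero P := by ext S; simp [SetFunction.smul_apply]
  smul_add P c d := by ext S; simp [SetFunction.smul_apply, mul_add, sum_add_distrib]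
  add_smul P Q c := by ext S; simp [SetFunction.smul_apply, mul_add, add_mul, sum_add_distrib]
  zero_smul c := by ext S; simp [SetFunction.smul_apply]

end SetFunction

open SetFunction

section Count

variable {α β γ ι : Type*}

/-- The number of structures in the family `F` on each finite set. -/
noncomputable def count (F : Finset α → Set β) : SetFunction α := fun S => (F S).ncard

lemma count_apply (F : Finset α → Set β) (S : Finset α) : count F S = (F S).ncard := rfl

lemma count_congr {F : Finset α → Set β} {G : Finset α → Set γ} {f : Finset α → β → γ}
    (h : ∀ S, Set.BijOn (f S) (F S) (G S)) : count F = count G := by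
  ext S
  rw [count_apply, count_apply, (h S).ncard_eq]

lemma count_sdiff {F G : Finset α → Set β} (hF : ∀ S, (F S).Finite) (h : ∀ S, G S ⊆ F S) :
    count (fun S => F S \ G S) = count F - count G := by
  ext S
  rw [SetFunction.sub_apply, count_apply, count_apply, count_apply,
    ← Set.ncard_sdiff_add_ncard_of_subset (h S) (hF S)]
  push_cast
  ring

lemma count_union_add_count_inter {F G : Finset α → Set β} (hF : ∀ S, (F S).Finite)
    (hG : ∀ S, (G S).Finite) :
    count (fun S => F S ∪ G S) + count (fun S => F S ∩ G S) = count F + count G := by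
  ext S
  have h := Set.ncard_union_add_ncard_inter (F S) (G S) (hF S) (hG S)
  simp only [SetFunction.add_apply, count_apply]
  exact_mod_cast h

variable [DecidableEq α]

lemma count_nonempty {F : Finset α → Set β} (h : (F ∅).ncard = 1) :
    count (fun S => {x ∈ F S | S.Nonempty}) = count F - delta := by
  ext S
  rw [SetFunction.sub_apply, count_apply, count_apply]
  obtain rfl | hS := S.eq_empty_or_nonempty
  · simp [h]
  · simp [hS, delta_of_nonempty]

/-- The members of `𝒥` whose support is exactly `T`. -/
def withSupport (supp : ι → Finset α) (𝒥 : Set ι) (T : Finset α) : Set ι := {J ∈ 𝒥 | supp J = T}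

/-- The ways to carve a member of `𝒥` out of `S` and put a structure of the family `G` on what is
left. -/
def pairs (supp : ι → Finset α) (𝒥 : Set ι) (G : Finset α → Set γ) (S : Finset α) : Set (ι × γ) :=
  {x | x.1 ∈ 𝒥 ∧ supp x.1 ⊆ S ∧ x.2 ∈ G (S \ supp x.1)}

variable {supp : ι → Finset α} {𝒥 : Set ι} {G : Finset α → Set γ}

lemma pairs_eq_biUnion (S : Finset α) :
    pairs supp 𝒥 G S = ⋃ T ∈ (S.powerset : Set (Finset α)), withSupport supp 𝒥 T ×ˢ G (S \ T) := by
  ext ⟨J, y⟩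
  simp only [pairs, withSupport, Set.mem_ofPred_eq, Set.mem_iUnion, Set.mem_prod, mem_coe,
    mem_powerset]
  constructor
  · rintro ⟨hJ, hsupp, hy⟩
    exact ⟨supp J, hsupp, ⟨hJ, rfl⟩, hy⟩
  · rintro ⟨T, hT, ⟨hJ, rfl⟩, hy⟩
    exact ⟨hJ, hT, hy⟩

variable [Finite ι]

lemma finite_pairs (hG : ∀ S, (G S).Finite) (S : Finset α) : (pairs supp 𝒥 G S).Finite := by
  rw [pairs_eq_biUnion]
  exact S.powerset.finite_toSet.biUnion fun T _ => (Set.toFinite _).prod (hG _)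

lemma count_pairs {P : ℚ⟦X⟧} (hG : ∀ S, (G S).Finite)
    (h𝒥 : count (withSupport supp 𝒥) = P • delta) : count (pairs supp 𝒥 G) = P • count G := by
  ext S
  have disj : (S.powerset : Set (Finset α)).PairwiseDisjoint
      fun T => withSupport supp 𝒥 T ×ˢ G (S \ T) := fun T _ U _ hne =>
    Set.disjoint_left.2 fun x hT hU => hne (hT.1.2.symm.trans hU.1.2)
  rw [count_apply, pairs_eq_biUnion, S.powerset.finite_toSet.ncard_biUnion
    (fun T _ => (Set.toFinite _).prod (hG _)) disj, finsum_mem_coe_finset, SetFunction.smul_apply]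
  push_cast
  refine sum_congr rfl fun T _ => ?_
  rw [← smul_delta_apply, ← h𝒥, Set.ncard_prod, Nat.cast_mul, count_apply, count_apply]

lemma count_unique {F : Finset α → Set β} (h : ∀ S, (F S).ncard = 1) :
    count F = E • (delta : SetFunction α) := by
  ext S
  rw [count_apply, h, smul_delta_apply, E, coeff_exp]
  simp [Nat.factorial_ne_zero]

lemma count_free_part [Finite α] (hG : ∀ S, (G S).Finite) :
    count (pairs id Set.univ G) = E • count G := by
  refine count_pairs hG (count_unique fun T => ?_)
  rw [Set.ncard_eq_one]
  exact ⟨T, by ext; simp [withSupport]⟩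

/-- The members of `𝒥` whose support lies in `T`. -/
def within (supp : ι → Finset α) (𝒥 : Set ι) (T : Finset α) : Set ι := {J ∈ 𝒥 | supp J ⊆ T}

lemma count_within [Finite α] : count (within supp 𝒥) = E • count (withSupport supp 𝒥) := by
  rw [← count_free_part fun _ => Set.toFinite _]
  refine count_congr (f := fun T J => (T \ supp J, J)) fun T =>
    Set.InvOn.bijOn (f' := Prod.snd) ⟨fun _ _ => rfl, ?_⟩ ?_ ?_
  · rintro ⟨A, J⟩ ⟨-, hA : A ⊆ T, -, hJ : supp J = T \ A⟩
    simp [hJ, hA]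
  · rintro J ⟨hJ, hsupp⟩
    exact ⟨trivial, sdiff_subset, hJ, (Finset.sdiff_sdiff_eq_self hsupp).symm⟩
  · rintro ⟨A, J⟩ ⟨-, -, hJ, hsupp⟩
    exact ⟨hJ, hsupp.le.trans sdiff_subset⟩

end Count

section Graph

variable {α : Type*} [DecidableEq α]

/-- The vertices of the directed graph `H` with an outgoing edge. -/
def sources (H : Finset (α × α)) : Finset α := H.image Prod.fst

/-- The vertices of the directed graph `H` with an incoming edge. -/
def targets (H : Finset (α × α)) : Finset α := H.image Prod.snd

/-- The vertices of the directed graph `H`; isolated vertices are not recorded. -/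
def verts (H : Finset (α × α)) : Finset α := sources H ∪ targets H

/-- `H` is a bipartite graph with all its edges directed from one side to the other. -/
def IsBipartite (H : Finset (α × α)) : Prop := Disjoint (sources H) (targets H)

/-- Some source of `H` is joined to every target; the empty graph qualifies. -/
def HasFullRow (H : Finset (α × α)) : Prop :=
  H.Nonempty → ∃ a, ∀ b ∈ targets H, (a, b) ∈ H

/-- Some target of `H` is joined to every source; the empty graph qualifies. -/
def HasFullCol (H : Finset (α × α)) : Prop :=
  H.Nonempty → ∃ b, ∀ a ∈ sources H, (a, b) ∈ H

lemma mem_sources {H : Finset (α × α)} {a : α} : a ∈ sources H ↔ ∃ b, (a, b) ∈ H := by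
  simp [sources]

lemma mem_targets {H : Finset (α × α)} {b : α} : b ∈ targets H ↔ ∃ a, (a, b) ∈ H := by
  simp [targets]

lemma mem_verts {H : Finset (α × α)} {a : α} :
    a ∈ verts H ↔ (∃ b, (a, b) ∈ H) ∨ ∃ b, (b, a) ∈ H := by
  rw [verts, mem_union, mem_sources, mem_targets]

lemma isBipartite_iff {H : Finset (α × α)} :
    IsBipartite H ↔ ∀ a b c, (a, b) ∈ H → (b, c) ∉ H := by
  simp only [IsBipartite, disjoint_left, mem_sources, mem_targets]
  grind

lemma verts_eq_empty {H : Finset (α × α)} : verts H = ∅ ↔ H = ∅ := by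
  simp [verts, sources, targets]

@[simp] lemma sources_image_swap (H : Finset (α × α)) :
    sources (H.image Prod.swap) = targets H := by
  simp [sources, targets, image_image, Function.comp_def]

@[simp] lemma targets_image_swap (H : Finset (α × α)) :
    targets (H.image Prod.swap) = sources H := by
  simp [sources, targets, image_image, Function.comp_def]

lemma subset_product_iff {H : Finset (α × α)} {A B : Finset α} :
    H ⊆ A ×ˢ B ↔ sources H ⊆ A ∧ targets H ⊆ B := by
  simp only [sources, targets, image_subset_iff, ← forall_and]
  exact forall₂_congr fun _ _ => mem_product

/-- The bipartite graphs on the vertex set `T`, as pairs of the left side and the edge set. -/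
def graphs (T : Finset α) : Set (Finset α × Finset (α × α)) :=
  {x | x.1 ⊆ T ∧ x.2 ⊆ x.1 ×ˢ (T \ x.1)}

/-- The graphs in which some left vertex is joined to the entire right side. -/
def rowGraphs (T : Finset α) : Set (Finset α × Finset (α × α)) :=
  {x ∈ graphs T | ∃ a ∈ x.1, ∀ b ∈ T \ x.1, (a, b) ∈ x.2}

/-- The graphs in which some right vertex is joined to the entire left side. -/
def colGraphs (T : Finset α) : Set (Finset α × Finset (α × α)) :=
  {x ∈ graphs T | ∃ b ∈ T \ x.1, ∀ a ∈ x.1, (a, b) ∈ x.2}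

/-- The non-edges of the graph `x` between its two sides. -/
def missing (T : Finset α) (x : Finset α × Finset (α × α)) : Finset (α × α) :=
  (x.1 ×ˢ (T \ x.1)) \ x.2

variable {T : Finset α} {x : Finset α × Finset (α × α)}

lemma mem_graphs : x ∈ graphs T ↔ x.1 ⊆ T ∧ sources x.2 ⊆ x.1 ∧ targets x.2 ⊆ T \ x.1 := by
  rw [graphs, Set.mem_ofPred_eq, subset_product_iff]

lemma isBipartite_of_mem_graphs (hx : x ∈ graphs T) : IsBipartite x.2 := by
  rw [mem_graphs] at hx
  exact disjoint_sdiff.mono hx.2.1 hx.2.2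

lemma verts_subset_of_mem_graphs (hx : x ∈ graphs T) : verts x.2 ⊆ T := by
  rw [mem_graphs] at hx
  exact union_subset (hx.2.1.trans hx.1) (hx.2.2.trans sdiff_subset)

lemma sources_mem_graphs {H : Finset (α × α)} (hH : IsBipartite H) (hsub : verts H ⊆ T) :
    (sources H, H) ∈ graphs T :=
  mem_graphs.2 ⟨subset_union_left.trans hsub, subset_rfl,
    subset_sdiff.2 ⟨subset_union_right.trans hsub, hH.symm⟩⟩

lemma sdiff_targets_mem_graphs {H : Finset (α × α)} (hH : IsBipartite H) (hsub : verts H ⊆ T) :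
    (T \ targets H, H) ∈ graphs T :=
  mem_graphs.2 ⟨sdiff_subset, subset_sdiff.2 ⟨subset_union_left.trans hsub, hH⟩,
    (Finset.sdiff_sdiff_eq_self (subset_union_right.trans hsub)).ge⟩

lemma missing_missing (hx : x ∈ graphs T) : missing T (x.1, missing T x) = x.2 :=
  Finset.sdiff_sdiff_eq_self hx.2

lemma missing_mem_graphs (hx : x ∈ graphs T) : (x.1, missing T x) ∈ graphs T :=
  ⟨hx.1, sdiff_subset⟩

lemma notMem_rowGraphs_iff (hx : x ∈ graphs T) :
    x ∉ rowGraphs T ↔ sources (missing T x) = x.1 := by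
  have hmissing := mem_graphs.1 (missing_mem_graphs hx)
  rw [Subset.antisymm_iff, and_iff_right hmissing.2.1]
  simp only [rowGraphs, Set.mem_ofPred_eq, hx, true_and, not_exists, not_and, subset_iff,
    mem_sources, missing, mem_sdiff, mem_product]
  grind

lemma notMem_colGraphs_iff (hx : x ∈ graphs T) :
    x ∉ colGraphs T ↔ targets (missing T x) = T \ x.1 := by
  have hmissing := mem_graphs.1 (missing_mem_graphs hx)
  rw [Subset.antisymm_iff, and_iff_right hmissing.2.2]
  simp only [colGraphs, Set.mem_ofPred_eq, hx, true_and, not_exists, not_and, subset_iff,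
    mem_targets, missing, mem_sdiff, mem_product]
  grind

lemma rowGraphs_subset (T : Finset α) : rowGraphs T ⊆ graphs T := Set.sep_subset _ _

lemma colGraphs_subset (T : Finset α) : colGraphs T ⊆ graphs T := Set.sep_subset _ _

/-- A graph is recovered from its non-edges as soon as they determine its left side. -/
lemma count_missing {𝒥 : Finset α → Set (Finset (α × α))}
    {side : Finset α → Finset (α × α) → Finset α}
    (h : ∀ T, ∀ H ∈ 𝒥 T, (side T H, H) ∈ graphs T) :
    count (fun T => {x ∈ graphs T | missing T x ∈ 𝒥 T ∧ side T (missing T x) = x.1}) =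
      count 𝒥 := by
  refine count_congr (f := missing) fun T => Set.InvOn.bijOn
    (f' := fun H => (side T H, missing T (side T H, H))) ⟨?_, ?_⟩ (fun x hx => hx.2.1) ?_
  · rintro x ⟨hx, -, hside⟩
    change (side T (missing T x), missing T (side T (missing T x), missing T x)) = x
    rw [hside, missing_missing hx]
  · exact fun H hH => missing_missing (h T H hH)
  · intro H hH
    have hmissing := missing_missing (h T H hH)
    refine ⟨missing_mem_graphs (h T H hH), ?_⟩
    change missing T (side T H, missing T (side T H, H)) ∈ 𝒥 T ∧
      side T (missing T (side T H, missing T (side T H, H))) = side T H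
    rw [hmissing]
    exact ⟨hH, rfl⟩

lemma missing_mem_within (hx : x ∈ graphs T) :
    missing T x ∈ within verts {H : Finset (α × α) | IsBipartite H} T :=
  ⟨isBipartite_of_mem_graphs (missing_mem_graphs hx),
    verts_subset_of_mem_graphs (missing_mem_graphs hx)⟩

variable [Finite α]

lemma count_graphs : count (graphs (α := α)) = Psi • delta := by
  ext T
  have fibers : graphs T = ⋃ B ∈ (T.powerset : Set (Finset α)),
      {B} ×ˢ ((B ×ˢ (T \ B)).powerset : Set (Finset (α × α))) := by
    ext ⟨B, H⟩
    simp [graphs, -coe_powerset]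
  have disj : (T.powerset : Set (Finset α)).PairwiseDisjoint fun B =>
      ({B} : Set (Finset α)) ×ˢ ((B ×ˢ (T \ B)).powerset : Set (Finset (α × α))) :=
    fun B _ C _ hne => Set.disjoint_left.2 fun x hB hC => hne (hB.1.symm.trans hC.1)
  rw [count_apply, fibers, T.powerset.finite_toSet.ncard_biUnion (fun _ _ => Set.toFinite _) disj,
    finsum_mem_coe_finset, smul_delta_apply, Psi, coeff_mk,
    ← sum_powerset_card_card_sdiff fun m n => (2 : ℚ) ^ (m * n)]
  simp [Set.ncard_prod, -coe_powerset]

lemma count_graphs_eq_smul_within :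
    count (graphs (α := α)) = E • count (within verts {H : Finset (α × α) | IsBipartite H}) := by
  rw [← count_free_part fun _ => Set.toFinite _]
  refine count_congr (f := fun _ x => (x.1 \ sources x.2, x.2)) fun _ =>
    Set.InvOn.bijOn (f' := fun x => (x.1 ∪ sources x.2, x.2)) ⟨?_, ?_⟩ ?_ ?_
  · rintro x hx
    simp [sdiff_union_of_subset (mem_graphs.1 hx).2.1]
  · rintro ⟨A, H⟩ ⟨-, -, -, hsub : verts H ⊆ _ \ A⟩
    have disj : Disjoint A (sources H) :=
      disjoint_sdiff.mono_right (subset_union_left.trans hsub)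
    simpa [union_sdiff_right] using sdiff_eq_self_of_disjoint disj
  · rintro x hx
    have hB := isBipartite_of_mem_graphs hx
    rw [mem_graphs] at hx
    refine ⟨trivial, sdiff_subset.trans hx.1, hB, ?_⟩
    rw [IsBipartite, disjoint_left] at hB
    simp only [verts, subset_iff, mem_union, mem_sdiff, id] at hx ⊢
    grind
  · rintro ⟨A, H⟩ ⟨-, hA : A ⊆ _, hH : IsBipartite H, hsub : verts H ⊆ _ \ A⟩
    rw [mem_graphs]
    rw [IsBipartite, disjoint_left] at hH
    simp only [verts, subset_iff, mem_union, mem_sdiff] at hsub hA ⊢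
    grind

lemma expNeg_mul_E : ExpNeg * E = 1 := by
  have h : ExpNeg = evalNegHom (exp ℚ) := by
    ext n
    simp [ExpNeg, evalNegHom, coeff_rescale, coeff_exp, div_eq_mul_inv]
  rw [h, E, mul_comm, exp_mul_exp_neg_eq_one]

lemma count_bipartite :
    count (within verts {H : Finset (α × α) | IsBipartite H}) = (ExpNeg * Psi) • delta := by
  rw [mul_smul, ← count_graphs, count_graphs_eq_smul_within, ← mul_smul, expNeg_mul_E, one_smul]

lemma count_graphs_sdiff_rowGraphs :
    count (fun T : Finset α => graphs T \ rowGraphs T) = (ExpNeg * Psi) • delta := by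
  rw [← count_bipartite, ← count_missing fun T H hH => sources_mem_graphs hH.1 hH.2]
  congr! 2 with T
  ext x
  refine and_congr_right fun hx => ?_
  rw [notMem_rowGraphs_iff hx, and_iff_right (missing_mem_within hx)]

lemma count_graphs_sdiff_colGraphs :
    count (fun T : Finset α => graphs T \ colGraphs T) = (ExpNeg * Psi) • delta := by
  rw [← count_bipartite, ← count_missing fun T H hH => sdiff_targets_mem_graphs hH.1 hH.2]
  congr! 2 with T
  ext x
  refine and_congr_right fun hx => ?_
  rw [notMem_colGraphs_iff hx, and_iff_right (missing_mem_within hx)]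
  have := (mem_graphs.1 (missing_mem_graphs hx)).2.2
  have := hx.1
  grind

/-- The exponential generating function of bipartite graphs without isolated vertices. -/
noncomputable def junctionSeries : ℚ⟦X⟧ := ExpNeg ^ 2 * Psi

/-- The exponential generating function of bipartite graphs without isolated vertices that have a
full row. -/
noncomputable def rowSeries : ℚ⟦X⟧ := ExpNeg * (Psi - ExpNeg * Psi + 1)

/-- The exponential generating function of bipartite graphs without isolated vertices that have
both a full row and a full column. -/
noncomputable def rowColSeries : ℚ⟦X⟧ := 1 + Psi - 2 * (ExpNeg * Psi) + ExpNeg ^ 2 * Psi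

lemma count_junctions :
    count (withSupport verts {H : Finset (α × α) | IsBipartite H}) = junctionSeries • delta := by
  rw [junctionSeries, sq, mul_assoc, mul_smul, ← count_bipartite, count_within, ← mul_smul,
    expNeg_mul_E, one_smul]

lemma count_graphs_sdiff_rowGraphs_union_colGraphs :
    count (fun T : Finset α => graphs T \ (rowGraphs T ∪ colGraphs T)) =
      junctionSeries • delta := by
  rw [← count_junctions,
    ← count_missing fun T (H : Finset (α × α)) hH => sources_mem_graphs hH.1 hH.2.le]
  congr! 2 with T
  ext x
  refine and_congr_right fun hx => ?_
  have hmem := missing_mem_within hx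
  have hgraph := (mem_graphs.1 (missing_mem_graphs hx)).2
  have hx1 := hx.1
  rw [Set.mem_union, not_or, notMem_rowGraphs_iff hx, notMem_colGraphs_iff hx]
  constructor
  · rintro ⟨hrow, hcol⟩
    exact ⟨⟨hmem.1, by rw [verts, hrow, hcol, union_sdiff_of_subset hx1]⟩, hrow⟩
  · rintro ⟨⟨-, hverts⟩, hrow⟩
    rw [verts, hrow] at hverts
    exact ⟨hrow, subset_antisymm hgraph.2 (sdiff_le_iff.2 hverts.ge)⟩

lemma count_rowGraphs : count (rowGraphs (α := α)) = (Psi - ExpNeg * Psi) • delta := by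
  have h := count_sdiff (fun _ => Set.toFinite _) (rowGraphs_subset (α := α))
  rw [count_graphs_sdiff_rowGraphs, count_graphs] at h
  rw [sub_smul, h]
  abel

lemma count_colGraphs : count (colGraphs (α := α)) = (Psi - ExpNeg * Psi) • delta := by
  have h := count_sdiff (fun _ => Set.toFinite _) (colGraphs_subset (α := α))
  rw [count_graphs_sdiff_colGraphs, count_graphs] at h
  rw [sub_smul, h]
  abel

lemma count_rowGraphs_inter_colGraphs :
    count (fun T : Finset α => rowGraphs T ∩ colGraphs T) = (rowColSeries - 1) • delta := by
  have h_union := count_sdiff (F := graphs (α := α)) (fun _ => Set.toFinite _) fun T =>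
    Set.union_subset (rowGraphs_subset T) (colGraphs_subset T)
  have h_inter := count_union_add_count_inter (F := rowGraphs (α := α)) (G := colGraphs)
    (fun _ => Set.toFinite _) fun _ => Set.toFinite _
  rw [count_graphs_sdiff_rowGraphs_union_colGraphs, count_graphs, junctionSeries] at h_union
  rw [count_rowGraphs, count_colGraphs] at h_inter
  calc count (fun T : Finset α => rowGraphs T ∩ colGraphs T)
      = (Psi - ExpNeg * Psi) • delta + (Psi - ExpNeg * Psi) • delta -
          (Psi • delta - (ExpNeg ^ 2 * Psi) • delta) := by
        rw [h_union, ← h_inter]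
        abel
    _ = (rowColSeries - 1) • delta := by
        rw [rowColSeries, ← add_smul, ← sub_smul, ← sub_smul]
        ring_nf

lemma count_row_within :
    count (within verts {H : Finset (α × α) | IsBipartite H ∧ HasFullRow H}) =
      (Psi - ExpNeg * Psi + 1) • delta := by
  have only_empty : within verts {H : Finset (α × α) | IsBipartite H ∧ HasFullRow H} ∅ = {∅} :=
    Set.eq_singleton_iff_unique_mem.2 ⟨⟨⟨by simp [IsBipartite, sources], by simp [HasFullRow]⟩,
      by simp [verts, sources, targets]⟩, fun H hH => verts_eq_empty.1 (subset_empty.1 hH.2)⟩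
  rw [add_smul, one_smul, ← count_rowGraphs, ← sub_eq_iff_eq_add,
    ← count_nonempty (by rw [only_empty, Set.ncard_singleton])]
  refine count_congr (f := fun T H => (T \ targets H, H)) fun T =>
    Set.InvOn.bijOn (f' := Prod.snd) ⟨fun _ _ => rfl, ?_⟩ ?_ ?_
  · rintro ⟨B, H⟩ ⟨hx, a, -, hrow⟩
    have htargets : targets H = T \ B := subset_antisymm (mem_graphs.1 hx).2.2 fun b hb =>
      mem_targets.2 ⟨a, hrow b hb⟩
    simp [htargets, inter_eq_right.2 hx.1]
  · rintro H ⟨⟨⟨hH, hrow⟩, hsub⟩, hT⟩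
    have htargets := Finset.sdiff_sdiff_eq_self (subset_union_right.trans hsub)
    refine ⟨sdiff_targets_mem_graphs hH hsub, ?_⟩
    change ∃ a ∈ T \ targets H, ∀ b ∈ T \ (T \ targets H), (a, b) ∈ H
    rw [htargets]
    obtain rfl | hne := H.eq_empty_or_nonempty
    · simpa [targets, Finset.Nonempty] using hT
    · obtain ⟨a, ha⟩ := hrow hne
      obtain ⟨⟨s, b⟩, hedge⟩ := hne
      have hsource := mem_sources.2 ⟨b, ha b (mem_targets.2 ⟨s, hedge⟩)⟩
      exact ⟨a, mem_sdiff.2 ⟨hsub (mem_union_left _ hsource), disjoint_left.1 hH hsource⟩, ha⟩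
  · rintro ⟨B, H⟩ ⟨hx, a, ha, hrow⟩
    exact ⟨⟨⟨isBipartite_of_mem_graphs hx, fun _ => ⟨a, fun b hb =>
      hrow b ((mem_graphs.1 hx).2.2 hb)⟩⟩, verts_subset_of_mem_graphs hx⟩, a, hx.1 ha⟩

lemma count_row_junctions :
    count (withSupport verts {H : Finset (α × α) | IsBipartite H ∧ HasFullRow H}) =
      rowSeries • delta := by
  rw [rowSeries, mul_smul, ← count_row_within, count_within, ← mul_smul, expNeg_mul_E, one_smul]

lemma count_col_junctions :
    count (withSupport verts {H : Finset (α × α) | IsBipartite H ∧ HasFullCol H}) =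
      rowSeries • delta := by
  rw [← count_row_junctions]
  refine count_congr (f := fun _ => image Prod.swap) fun T =>
    Set.InvOn.bijOn (f' := image Prod.swap) ⟨?_, ?_⟩ ?_ ?_
  · exact fun H _ => by simp [image_image]
  · exact fun H _ => by simp [image_image]
  · rintro H ⟨⟨hH, hcol⟩, hsupp⟩
    refine ⟨⟨?_, ?_⟩, ?_⟩
    · simpa [IsBipartite, disjoint_comm] using hH
    · simpa [HasFullCol, HasFullRow] using hcol
    · simpa [verts, union_comm] using hsupp
  · rintro H ⟨⟨hH, hrow⟩, hsupp⟩
    refine ⟨⟨?_, ?_⟩, ?_⟩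
    · simpa [IsBipartite, disjoint_comm] using hH
    · simpa [HasFullCol, HasFullRow] using hrow
    · simpa [verts, union_comm] using hsupp

lemma count_rowCol_junctions :
    count (withSupport verts {H : Finset (α × α) | IsBipartite H ∧ HasFullRow H ∧ HasFullCol H}) =
      rowColSeries • delta := by
  have only_empty :
      withSupport verts {H : Finset (α × α) | IsBipartite H ∧ HasFullRow H ∧ HasFullCol H} ∅ =
        {∅} :=
    Set.eq_singleton_iff_unique_mem.2 ⟨⟨⟨by simp [IsBipartite, sources], by simp [HasFullRow],
      by simp [HasFullCol]⟩, by simp [verts, sources, targets]⟩, fun H hH => verts_eq_empty.1 hH.2⟩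
  rw [← sub_add_cancel rowColSeries 1, add_smul, one_smul, ← count_rowGraphs_inter_colGraphs,
    ← sub_eq_iff_eq_add, ← count_nonempty (by rw [only_empty, Set.ncard_singleton])]
  refine count_congr (f := fun _ H => (sources H, H)) fun _ =>
    Set.InvOn.bijOn (f' := Prod.snd) ⟨fun _ _ => rfl, ?_⟩ ?_ ?_
  · rintro ⟨B, H⟩ ⟨⟨hx, -⟩, -, b, -, hcol⟩
    have hsources : sources H = B := subset_antisymm (mem_graphs.1 hx).2.1 fun a ha =>
      mem_sources.2 ⟨b, hcol a ha⟩
    simp [hsources]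
  · rintro H ⟨⟨⟨hH, hrow, hcol⟩, rfl⟩, hT⟩
    have hmem := sources_mem_graphs hH subset_rfl
    have hne : H.Nonempty := nonempty_iff_ne_empty.2 fun h => hT.ne_empty (verts_eq_empty.2 h)
    have htargets : verts H \ sources H = targets H := by
      rw [verts, union_sdiff_cancel_left hH]
    obtain ⟨a, ha⟩ := hrow hne
    obtain ⟨b, hb⟩ := hcol hne
    obtain ⟨⟨s, t⟩, hedge⟩ := hne
    have hsource := mem_sources.2 ⟨t, ha t (mem_targets.2 ⟨s, hedge⟩)⟩
    have htarget := mem_targets.2 ⟨s, hb s (mem_sources.2 ⟨t, hedge⟩)⟩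
    exact ⟨⟨hmem, a, hsource, htargets ▸ ha⟩, hmem, b, htargets ▸ htarget, hb⟩
  · rintro ⟨B, H⟩ ⟨⟨hx, a, ha, hrow⟩, -, b, -, hcol⟩
    have hgraph := (mem_graphs.1 hx).2
    have hsources : sources H = B := subset_antisymm hgraph.1 fun a ha =>
      mem_sources.2 ⟨b, hcol a ha⟩
    have htargets : targets H = _ \ B := subset_antisymm hgraph.2 fun b hb =>
      mem_targets.2 ⟨a, hrow b hb⟩
    refine ⟨⟨⟨isBipartite_of_mem_graphs hx, fun _ => ⟨a, fun b hb => hrow b (hgraph.2 hb)⟩,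
      fun _ => ⟨b, fun a ha => hcol a (hgraph.1 ha)⟩⟩, ?_⟩, a, hx.1 ha⟩
    rw [verts, hsources, htargets, union_sdiff_of_subset hx.1]

end Graph

section Layering

variable {α : Type*} {S : Finset α} {lv : α → ℕ} {H : Finset (α × α)}

/-- The edges of `H` that start on level `i`. -/
def layer (lv : α → ℕ) (H : Finset (α × α)) (i : ℕ) : Finset (α × α) := {p ∈ H | lv p.1 = i}

lemma mem_layer {i : ℕ} {a b : α} : (a, b) ∈ layer lv H i ↔ (a, b) ∈ H ∧ lv a = i := by
  simp [layer]

/-- The edges above the bottom layer. -/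
def upper (lv : α → ℕ) (H : Finset (α × α)) : Finset (α × α) := {p ∈ H | lv p.1 ≠ 0}

lemma mem_upper {a b : α} : (a, b) ∈ upper lv H ↔ (a, b) ∈ H ∧ lv a ≠ 0 := by
  simp [upper]

lemma layer_upper (i : ℕ) :
    layer (fun a => lv a - 1) (upper lv H) i = layer lv H (i + 1) := by
  ext ⟨a, b⟩
  simp only [mem_layer, mem_upper]
  grind

variable [DecidableEq α]

/-- `H` is a graph on `S` whose edges climb one level of `lv`, no vertex being both a source and a
target. Levels are `0` outside `S`, so that `S`, `lv` and `H` encode one structure on `S`. -/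
structure IsStratified (S : Finset α) (lv : α → ℕ) (H : Finset (α × α)) : Prop where
  level_eq_zero : ∀ a ∉ S, lv a = 0
  verts_subset : verts H ⊆ S
  level_target : ∀ a b, (a, b) ∈ H → lv b = lv a + 1
  bipartite : IsBipartite H

/-- When `H` holds the incomparable pairs of elements on consecutive levels, this says that some
element of level `i` lies below some element of level `i + 2` with no element between them. -/
def Blocked (lv : α → ℕ) (H : Finset (α × α)) (i : ℕ) : Prop :=
  (∀ a, lv a = i + 1 → a ∈ verts H) ∧ HasFullRow (layer lv H i) ∧ HasFullCol (layer lv H (i + 1))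

/-- The stratified graphs on `S`. -/
def stratified (S : Finset α) : Set ((α → ℕ) × Finset (α × α)) := {x | IsStratified S x.1 x.2}

/-- The stratified graphs on `S` in which no element of level `0` is isolated. -/
def grounded (S : Finset α) : Set ((α → ℕ) × Finset (α × α)) :=
  {x ∈ stratified S | ∀ a ∈ S, x.1 a = 0 → a ∈ verts x.2}

/-- The encodings of the weakly graded posets on `S` that avoid `3+1`, up to degenerate cases:
`lv` is the rank and `H` holds the incomparable pairs of elements on consecutive levels. -/
def layerings (S : Finset α) : Set ((α → ℕ) × Finset (α × α)) :=
  {x ∈ stratified S | ∀ i, (∃ a, i + 2 ≤ x.1 a) → ¬ Blocked x.1 x.2 i}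

/-- The layerings in which no element of level `0` is isolated. -/
def reduced (S : Finset α) : Set ((α → ℕ) × Finset (α × α)) :=
  layerings S ∩ grounded S

/-- The nonempty reduced layerings that a bottom layer with a full row would block. -/
def obstructed (S : Finset α) : Set ((α → ℕ) × Finset (α × α)) :=
  {x ∈ reduced S | S.Nonempty ∧ HasFullCol (layer x.1 x.2 0)}

namespace IsStratified

variable (h : IsStratified S lv H)
include h

lemma source_mem {a b : α} (hab : (a, b) ∈ H) : a ∈ S :=
  h.verts_subset (mem_verts.2 (.inl ⟨b, hab⟩))

lemma target_mem {a b : α} (hab : (a, b) ∈ H) : b ∈ S :=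
  h.verts_subset (mem_verts.2 (.inr ⟨a, hab⟩))

lemma not_consecutive {a b c : α} (hab : (a, b) ∈ H) : (b, c) ∉ H :=
  isBipartite_iff.1 h.bipartite a b c hab

lemma mem_of_level_pos {a : α} (ha : 0 < lv a) : a ∈ S := by
  by_contra ha'
  exact ha.ne' (h.level_eq_zero a ha')

end IsStratified

lemma exists_level_eq {x : (α → ℕ) × Finset (α × α)} (hx : x ∈ layerings S) {i : ℕ} {a : α}
    (hi : 0 < i) (hia : i ≤ x.1 a) : ∃ b, x.1 b = i := by
  by_contra! hempty
  obtain ⟨i, rfl⟩ := Nat.exists_eq_add_one.2 hi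
  refine hx.2 i ⟨a, lt_of_le_of_ne hia (hempty a).symm⟩ ⟨fun b hb => absurd hb (hempty b), ?_, ?_⟩
  · rintro ⟨⟨b, c⟩, hbc⟩
    rw [mem_layer] at hbc
    exact absurd ((hx.1.level_target b c hbc.1).trans (by rw [hbc.2])) (hempty c)
  · rintro ⟨⟨b, c⟩, hbc⟩
    exact absurd (mem_layer.1 hbc).2 (hempty b)

lemma finite_layerings [Finite α] (S : Finset α) : (layerings S).Finite := by
  cases nonempty_fintype α
  refine ((Set.Finite.pi' fun _ => Set.finite_Iic (Fintype.card α)).prod Set.finite_univ).subset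
    fun x hx => ⟨fun a => ?_, trivial⟩
  have hsub : Finset.Icc 1 (x.1 a) ⊆ univ.image x.1 := fun i hi => by
    obtain ⟨b, hb⟩ := exists_level_eq hx (mem_Icc.1 hi).1 (mem_Icc.1 hi).2
    exact mem_image.2 ⟨b, mem_univ b, hb⟩
  simpa using (card_le_card hsub).trans card_image_le

lemma count_layerings [Finite α] : count (layerings (α := α)) = E • count reduced := by
  rw [← count_free_part (G := reduced) fun S => (finite_layerings S).subset (Set.inter_subset_left)]
  refine count_congr (f := fun S x => ({a ∈ S | x.1 a = 0 ∧ a ∉ verts x.2}, x)) fun S =>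
    Set.InvOn.bijOn (f' := Prod.snd) ⟨fun _ _ => rfl, ?_⟩ ?_ ?_
  · rintro ⟨A, lv, H⟩ ⟨-, hA : A ⊆ S, ⟨hx : IsStratified (S \ A) lv H, -⟩, -, hred⟩
    have free : {a ∈ S | lv a = 0 ∧ a ∉ verts H} = A := by
      ext a
      have := hx.level_eq_zero a
      have := @hx.verts_subset a
      have := hred a
      grind
    exact Prod.ext free rfl
  · rintro ⟨lv, H⟩ ⟨hx, hblocked⟩
    refine ⟨trivial, filter_subset _ _, ⟨?_, hblocked⟩, ?_, by grind⟩
    all_goals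
      have := hx.level_eq_zero
      have := hx.verts_subset
      exact ⟨by grind, by grind, hx.level_target, hx.bipartite⟩
  · rintro ⟨A, lv, H⟩ ⟨-, -, ⟨hx, hblocked⟩, -⟩
    exact ⟨⟨fun a ha => hx.level_eq_zero a fun h => ha (sdiff_subset h),
      hx.verts_subset.trans sdiff_subset, hx.level_target, hx.bipartite⟩, hblocked⟩

/-- Split off the bottom layer of edges and lower all levels by one. -/
def peel (x : (α → ℕ) × Finset (α × α)) : Finset (α × α) × (α → ℕ) × Finset (α × α) :=
  (layer x.1 x.2 0, fun a => x.1 a - 1, upper x.1 x.2)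

/-- The inverse of `peel` on graphs with vertex set in `S`. -/
def unpeel (S : Finset α) (y : Finset (α × α) × (α → ℕ) × Finset (α × α)) :
    (α → ℕ) × Finset (α × α) :=
  (fun a => if a ∈ S \ sources y.1 then y.2.1 a + 1 else 0, y.1 ∪ y.2.2)

lemma mem_sources_layer_zero {a : α} (hx : (lv, H) ∈ grounded S) :
    a ∈ sources (layer lv H 0) ↔ a ∈ S ∧ lv a = 0 := by
  simp only [mem_sources, mem_layer]
  constructor
  · rintro ⟨b, hab, ha⟩
    exact ⟨hx.1.source_mem hab, ha⟩
  · rintro ⟨ha, ha0⟩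
    obtain ⟨b, hab⟩ | ⟨b, hba⟩ := mem_verts.1 (hx.2 a ha ha0)
    · exact ⟨b, hab, ha0⟩
    · exact absurd (hx.1.level_target b a hba) (by lia)

lemma mem_verts_layer_zero {a : α} (hx : (lv, H) ∈ grounded S) :
    a ∈ verts (layer lv H 0) ↔ a ∈ S ∧ (lv a = 0 ∨ ∃ b, (b, a) ∈ H ∧ lv b = 0) := by
  rw [verts, mem_union, mem_sources_layer_zero hx, mem_targets, and_or_left]
  simp only [mem_layer]
  exact or_congr_right ⟨fun ⟨b, hb⟩ => ⟨hx.1.target_mem hb.1, b, hb⟩, fun h => h.2⟩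

lemma IsStratified.of_edges (level_eq_zero : ∀ a ∉ S, lv a = 0)
    (edge : ∀ a b, (a, b) ∈ H → a ∈ S ∧ b ∈ S ∧ lv b = lv a + 1)
    (not_consecutive : ∀ a b c, (a, b) ∈ H → (b, c) ∉ H) : IsStratified S lv H where
  level_eq_zero := level_eq_zero
  verts_subset a ha := by
    obtain ⟨b, hab⟩ | ⟨b, hba⟩ := mem_verts.1 ha
    exacts [(edge a b hab).1, (edge b a hba).2.1]
  level_target a b hab := (edge a b hab).2.2
  bipartite := isBipartite_iff.2 not_consecutive

lemma peel_mem_pairs (hx : (lv, H) ∈ grounded S) :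
    peel (lv, H) ∈ pairs verts {J | IsBipartite J} stratified S := by
  have h : IsStratified S lv H := hx.1
  have hJ : layer lv H 0 ⊆ H := filter_subset _ _
  refine ⟨h.bipartite.mono (image_subset_image hJ) (image_subset_image hJ),
    (union_subset_union (image_subset_image hJ) (image_subset_image hJ)).trans h.verts_subset,
    .of_edges ?_ ?_ ?_⟩
  all_goals simp only [peel, mem_sdiff, mem_verts_layer_zero hx, mem_upper]
  · intro a ha
    have := h.level_eq_zero a
    have := fun b => h.level_target b a
    grind
  · rintro a b ⟨hab, ha⟩
    have := h.level_target a b hab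
    refine ⟨⟨h.source_mem hab, ?_⟩, ⟨h.target_mem hab, ?_⟩, by lia⟩
    · rintro ⟨-, ha0 | ⟨c, hca, -⟩⟩
      exacts [ha ha0, h.not_consecutive hca hab]
    · rintro ⟨-, hb0 | ⟨c, hcb, hc⟩⟩
      · lia
      · have := h.level_target c b hcb
        lia
  · exact fun a b c hab hbc => h.not_consecutive hab.1 hbc.1

lemma unpeel_mem_grounded {J : Finset (α × α)} (hJ : IsBipartite J) (hsub : verts J ⊆ S)
    (h : IsStratified (S \ verts J) lv H) : unpeel S (J, lv, H) ∈ grounded S := by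
  have hJS : ∀ a ∈ verts J, a ∈ S := hsub
  have hverts : ∀ a b, (a, b) ∈ J → a ∈ verts J ∧ b ∈ verts J := fun a b hab =>
    ⟨mem_verts.2 (.inl ⟨b, hab⟩), mem_verts.2 (.inr ⟨a, hab⟩)⟩
  have hzero := h.level_eq_zero
  refine ⟨.of_edges ?_ ?_ ?_, ?_⟩ <;> simp only [unpeel, mem_sdiff, mem_union]
  · grind
  · rintro a b (hab | hab)
    · have := mem_sources.2 ⟨b, hab⟩
      have := disjoint_right.1 hJ (mem_targets.2 ⟨a, hab⟩)
      grind
    · have := mem_sdiff.1 (h.source_mem hab)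
      have := mem_sdiff.1 (h.target_mem hab)
      have := h.level_target a b hab
      grind [verts]
  · rintro a b c (hab | hab) (hbc | hbc)
    · exact isBipartite_iff.1 hJ a b c hab hbc
    · exact (mem_sdiff.1 (h.source_mem hbc)).2 (hverts a b hab).2
    · exact (mem_sdiff.1 (h.target_mem hab)).2 (hverts b c hbc).1
    · exact h.not_consecutive hab hbc
  · intro a ha ha0
    have haJ : a ∈ sources J := by grind
    obtain ⟨b, hab⟩ := mem_sources.1 haJ
    exact mem_verts.2 (.inl ⟨b, mem_union_left _ hab⟩)

lemma peel_unpeel {J : Finset (α × α)} (h : IsStratified (S \ verts J) lv H) :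
    peel (unpeel S (J, lv, H)) = (J, lv, H) := by
  have level_source : ∀ {a b}, (a, b) ∈ J → (unpeel S (J, lv, H)).1 a = 0 := fun {a b} hab =>
    if_neg fun ha => (mem_sdiff.1 ha).2 (mem_sources.2 ⟨b, hab⟩)
  have level_upper : ∀ {a b}, (a, b) ∈ H → (unpeel S (J, lv, H)).1 a ≠ 0 := fun {a b} hab => by
    have ha := mem_sdiff.1 (h.source_mem hab)
    have : a ∈ S \ sources J := mem_sdiff.2 ⟨ha.1, fun h => ha.2 (mem_union_left _ h)⟩
    simpa [unpeel] using this
  refine Prod.ext ?_ (Prod.ext (funext fun a => ?_) ?_)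
  · ext ⟨a, b⟩
    simp only [peel, mem_layer]
    exact ⟨fun ⟨hab, ha⟩ => (mem_union.1 hab).resolve_right fun h => level_upper h ha,
      fun hab => ⟨mem_union_left _ hab, level_source hab⟩⟩
  · have := h.level_eq_zero a
    simp only [peel, unpeel, verts] at this ⊢
    grind
  · ext ⟨a, b⟩
    simp only [peel, mem_upper]
    exact ⟨fun ⟨hab, ha⟩ => (mem_union.1 hab).resolve_left fun h => ha (level_source h),
      fun hab => ⟨mem_union_right _ hab, level_upper hab⟩⟩

lemma unpeel_peel (hx : (lv, H) ∈ grounded S) : unpeel S (peel (lv, H)) = (lv, H) := by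
  refine Prod.ext (funext fun a => ?_) ?_
  · simp only [unpeel, peel, mem_sdiff, mem_sources_layer_zero hx]
    have := hx.1.level_eq_zero a
    grind
  · exact filter_union_filter_not_eq _ _

lemma bijOn_peel (S : Finset α) :
    Set.BijOn peel (grounded S) (pairs verts {J | IsBipartite J} stratified S) :=
  Set.InvOn.bijOn (f' := unpeel S)
    ⟨fun _ hx => unpeel_peel hx, fun _ hy => peel_unpeel hy.2.2⟩
    (fun _ hx => peel_mem_pairs hx) fun _ hy => unpeel_mem_grounded hy.1 hy.2.1 hy.2.2

lemma blocked_peel (h : IsStratified S lv H) (i : ℕ) :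
    Blocked (fun a => lv a - 1) (upper lv H) i ↔ Blocked lv H (i + 1) := by
  simp only [Blocked, layer_upper, mem_verts, mem_upper]
  have := h.level_target
  grind

lemma blocked_zero_iff (hx : (lv, H) ∈ grounded S) :
    Blocked lv H 0 ↔ HasFullRow (layer lv H 0) ∧ HasFullCol (layer lv H 1) ∧
      ((fun a => lv a - 1, upper lv H) : (α → ℕ) × _) ∈ grounded (S \ verts (layer lv H 0)) := by
  have hstrat : (fun a => lv a - 1, upper lv H) ∈ stratified (S \ verts (layer lv H 0)) :=
    (peel_mem_pairs hx).2.2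
  have h : IsStratified S lv H := hx.1
  have hverts : (∀ a, lv a = 1 → a ∈ verts H) ↔
      ∀ a ∈ S \ verts (layer lv H 0), lv a - 1 = 0 → a ∈ verts (upper lv H) := by
    simp only [mem_sdiff, mem_verts_layer_zero hx, mem_verts, mem_upper]
    have := h.level_target
    have := h.level_eq_zero
    grind
  rw [grounded, Set.mem_ofPred_eq, and_iff_right hstrat, ← hverts, Blocked]
  tauto

lemma nonempty_iff_exists_level_pos (hx : (lv, H) ∈ grounded S) :
    S.Nonempty ↔ ∃ a, 0 < lv a := by
  refine ⟨?_, fun ⟨a, ha⟩ => ⟨a, hx.1.mem_of_level_pos ha⟩⟩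
  rintro ⟨a, ha⟩
  obtain ha0 | hpos := Nat.eq_zero_or_pos (lv a)
  · obtain ⟨b, hab⟩ | ⟨b, hba⟩ := mem_verts.1 (hx.2 a ha ha0)
    · exact ⟨b, by have := hx.1.level_target a b hab; lia⟩
    · exact ⟨a, by have := hx.1.level_target b a hba; lia⟩
  · exact ⟨a, hpos⟩

lemma hasFullRow_and_mem_obstructed_iff (hx : (lv, H) ∈ grounded S)
    (htail : ((fun a => lv a - 1, upper lv H) : (α → ℕ) × _) ∈
      layerings (S \ verts (layer lv H 0))) :
    HasFullRow (layer lv H 0) ∧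
      ((fun a => lv a - 1, upper lv H) : (α → ℕ) × _) ∈ obstructed (S \ verts (layer lv H 0)) ↔
    (∃ a, 2 ≤ lv a) ∧ Blocked lv H 0 := by
  rw [blocked_zero_iff hx]
  simp only [obstructed, reduced, Set.mem_ofPred_eq, Set.mem_inter_iff, htail, true_and,
    layer_upper]
  constructor
  · rintro ⟨hrow, hred, hne, hcol⟩
    obtain ⟨a, ha⟩ := (nonempty_iff_exists_level_pos hred).1 hne
    exact ⟨⟨a, by lia⟩, hrow, hcol, hred⟩
  · rintro ⟨⟨a, ha⟩, hrow, hcol, htail⟩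
    exact ⟨hrow, htail, (nonempty_iff_exists_level_pos htail).2 ⟨a, by lia⟩, hcol⟩

lemma mem_layerings_iff_peel (hx : (lv, H) ∈ grounded S) :
    (lv, H) ∈ layerings S ↔ (peel (lv, H)).2 ∈ layerings (S \ verts (layer lv H 0)) ∧
      ¬ ((∃ a, 2 ≤ lv a) ∧ Blocked lv H 0) := by
  have htail : (peel (lv, H)).2 ∈ stratified (S \ verts (layer lv H 0)) := (peel_mem_pairs hx).2.2
  have hstrat : IsStratified S lv H := hx.1
  rw [layerings, layerings, Set.mem_sep_iff, Set.mem_sep_iff, and_iff_right htail,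
    and_iff_right (show (lv, H) ∈ stratified S from hstrat)]
  simp only [peel, blocked_peel hstrat, not_and]
  constructor
  · exact fun h => ⟨fun i ⟨a, ha⟩ => h (i + 1) ⟨a, by lia⟩, h 0⟩
  · rintro ⟨h, h0⟩ (_ | i) ⟨a, ha⟩
    · exact h0 ⟨a, ha⟩
    · exact h i ⟨a, by lia⟩

lemma bijOn_peel_reduced (P : Finset (α × α) → Prop) (S : Finset α) :
    Set.BijOn peel {x ∈ reduced S | P (layer x.1 x.2 0)}
      (pairs verts {J | IsBipartite J ∧ P J} layerings S \
        pairs verts {J | IsBipartite J ∧ P J ∧ HasFullRow J} obstructed S) := by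
  convert (bijOn_peel S).subset_right (r := pairs verts {J | IsBipartite J ∧ P J} layerings S \
    pairs verts {J | IsBipartite J ∧ P J ∧ HasFullRow J} obstructed S)
    (fun y hy => ⟨hy.1.1.1, hy.1.2.1, hy.1.2.2.1⟩) using 1
  ext ⟨lv, H⟩
  rw [Set.mem_inter_iff]
  refine ⟨fun hx => ⟨hx.1.2, ?_⟩, fun ⟨hx, hmem, hnot⟩ => ?_⟩
  · have hgr := hx.1.2
    obtain ⟨htail, hunblocked⟩ := (mem_layerings_iff_peel hgr).1 hx.1.1
    obtain ⟨hbip, hsub, -⟩ := peel_mem_pairs hgr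
    refine ⟨⟨⟨hbip, hx.2⟩, hsub, htail⟩, fun hy => ?_⟩
    exact hunblocked ((hasFullRow_and_mem_obstructed_iff hgr htail).1 ⟨hy.1.2.2, hy.2.2⟩)
  · obtain ⟨⟨hbip, hP⟩, hsub, htail⟩ := hmem
    have hunblocked := mt (hasFullRow_and_mem_obstructed_iff hx htail).2 fun h =>
      hnot ⟨⟨hbip, hP, h.1⟩, hsub, h.2⟩
    exact ⟨⟨(mem_layerings_iff_peel hx).2 ⟨htail, hunblocked⟩, hx⟩, hP⟩

lemma obstructed_subset (S : Finset α) : obstructed S ⊆ layerings S :=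
  (Set.sep_subset _ _).trans Set.inter_subset_left

lemma stratified_empty : stratified (∅ : Finset α) = {(0, ∅)} := by
  refine Set.eq_singleton_iff_unique_mem.2 ⟨?_, ?_⟩
  · exact .of_edges (fun _ _ => rfl) (by simp) (by simp)
  · rintro ⟨lv, H⟩ hx
    exact Prod.ext (funext fun a => hx.level_eq_zero a (notMem_empty a))
      (verts_eq_empty.1 (subset_empty.1 hx.verts_subset))

lemma reduced_empty : reduced (∅ : Finset α) = {(0, ∅)} := by
  refine Set.eq_singleton_iff_unique_mem.2 ⟨?_, ?_⟩
  · refine ⟨⟨?_, by simp⟩, ?_, by simp⟩ <;> simp [stratified_empty]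
  · exact fun x hx => by simpa [stratified_empty] using hx.1.1

/-- The layerings without elements of level `0`. -/
def rootless (S : Finset α) : Set ((α → ℕ) × Finset (α × α)) :=
  {x ∈ layerings S | ∀ a ∈ S, x.1 a ≠ 0}

/-- The layerings with at most the levels `0` and `1`. -/
def short (S : Finset α) : Set ((α → ℕ) × Finset (α × α)) := {x ∈ layerings S | ∀ a, x.1 a ≤ 1}

/-- The layerings with elements on level `0` and on level `2`. -/
def tall (S : Finset α) : Set ((α → ℕ) × Finset (α × α)) :=
  {x ∈ layerings S | (∃ a ∈ S, x.1 a = 0) ∧ ∃ a, 2 ≤ x.1 a}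

lemma rootless_eq (S : Finset α) : rootless S = {x ∈ reduced S | layer x.1 x.2 0 = ∅} := by
  ext ⟨lv, H⟩
  constructor
  · rintro ⟨hx, hpos⟩
    exact ⟨⟨hx, hx.1, fun a ha ha0 => absurd ha0 (hpos a ha)⟩,
      filter_eq_empty_iff.2 fun p hp => hpos p.1 (hx.1.source_mem hp)⟩
  · rintro ⟨⟨hx, hgr⟩, hempty⟩
    refine ⟨hx, fun a ha ha0 => ?_⟩
    have := (mem_sources_layer_zero hgr).2 ⟨ha, ha0⟩
    simp [show layer lv H 0 = ∅ from hempty, sources] at this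

lemma tall_eq (S : Finset α) : tall S = layerings S \ (rootless S ∪ short S) := by
  ext x
  simp only [tall, rootless, short, Set.mem_sdiff, Set.mem_union, Set.mem_ofPred_eq]
  grind

lemma count_empty_junction :
    count (withSupport verts {J : Finset (α × α) | IsBipartite J ∧ J = ∅}) = delta := by
  ext T
  obtain rfl | hT := T.eq_empty_or_nonempty
  · have : withSupport verts {J : Finset (α × α) | IsBipartite J ∧ J = ∅} ∅ = {∅} := by
      ext J
      have : IsBipartite (∅ : Finset (α × α)) := by simp [IsBipartite, sources]
      simp only [withSupport, verts_eq_empty, Set.mem_ofPred_eq, Set.mem_singleton_iff]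
      grind
    rw [count_apply, this, Set.ncard_singleton, delta_empty, Nat.cast_one]
  · have : withSupport verts {J : Finset (α × α) | IsBipartite J ∧ J = ∅} T = ∅ :=
      Set.eq_empty_of_forall_notMem fun J hJ =>
        hT.ne_empty (hJ.2.symm.trans (verts_eq_empty.2 hJ.1.2))
    rw [count_apply, this, Set.ncard_empty, delta_of_nonempty hT, Nat.cast_zero]

lemma count_short : count (short (α := α)) = count graphs := by
  refine count_congr (f := fun S x => ({a ∈ S | x.1 a = 0}, x.2)) fun S => Set.InvOn.bijOn
    (f' := fun y => (fun a => if a ∈ S \ y.1 then 1 else 0, y.2)) ⟨?_, ?_⟩ ?_ ?_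
  · rintro ⟨lv, H⟩ ⟨⟨hx, -⟩, hle⟩
    refine Prod.ext (funext fun a => ?_) rfl
    have := hx.level_eq_zero a
    have := hle a
    grind
  · rintro ⟨B, H⟩ ⟨hB : B ⊆ S, -⟩
    refine Prod.ext (Finset.ext fun a => ?_) rfl
    have := @hB a
    grind
  · rintro ⟨lv, H⟩ ⟨⟨hx, -⟩, hle⟩
    refine ⟨filter_subset _ _, fun ⟨a, b⟩ hab => ?_⟩
    have := hx.source_mem hab
    have := hx.target_mem hab
    have := hx.level_target a b hab
    have := hle b
    simp only [mem_product, mem_filter, mem_sdiff]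
    grind
  · rintro ⟨B, H⟩ ⟨hB : B ⊆ S, hH : H ⊆ B ×ˢ (S \ B)⟩
    have hedge : ∀ a b, (a, b) ∈ H → a ∈ B ∧ b ∈ S \ B := fun a b hab => mem_product.1 (hH hab)
    refine ⟨⟨.of_edges ?_ ?_ ?_, ?_⟩, ?_⟩ <;> grind

lemma count_rootless_inter_short :
    count (fun S : Finset α => rootless S ∩ short S) = E • delta := by
  refine count_unique fun S => Set.ncard_eq_one.2
    ⟨(fun a => if a ∈ S then 1 else 0, ∅), Set.eq_singleton_iff_unique_mem.2 ⟨?_, ?_⟩⟩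
  · have : IsStratified S (fun a => if a ∈ S then 1 else 0) ∅ :=
      .of_edges (by grind) (by simp) (by simp)
    refine ⟨⟨⟨this, ?_⟩, ?_⟩, ⟨this, ?_⟩, ?_⟩ <;> grind
  · rintro ⟨lv, H⟩ ⟨⟨⟨hx, -⟩, hpos⟩, -, hle⟩
    refine Prod.ext (funext fun a => ?_) (eq_empty_of_forall_notMem fun ⟨a, b⟩ hab => ?_)
    · have := hx.level_eq_zero a
      have := hpos a
      have := hle a
      grind
    · have := hpos a (hx.source_mem hab)
      have := hle b
      have := hx.level_target a b hab
      grind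
variable [Finite α]

lemma count_reduced_head {P : Finset (α × α) → Prop} {A B : ℚ⟦X⟧}
    (hA : count (withSupport verts {J | IsBipartite J ∧ P J}) = A • delta)
    (hB : count (withSupport verts {J | IsBipartite J ∧ P J ∧ HasFullRow J}) = B • delta) :
    count (fun S : Finset α => {x ∈ reduced S | P (layer x.1 x.2 0)}) =
      A • count layerings - B • count obstructed := by
  have hfin : ∀ S : Finset α, (obstructed S).Finite := fun S =>
    (finite_layerings S).subset (obstructed_subset S)
  rw [count_congr (bijOn_peel_reduced P), count_sdiff (finite_pairs finite_layerings),
    count_pairs finite_layerings hA, count_pairs hfin hB]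
  exact fun S x hx => ⟨⟨hx.1.1, hx.1.2.1⟩, hx.2.1, obstructed_subset _ hx.2.2⟩

lemma count_reduced :
    count (reduced (α := α)) =
      junctionSeries • count layerings - rowSeries • count obstructed := by
  simpa using count_reduced_head (P := fun _ => True) (by simpa using count_junctions (α := α))
    (by simpa using count_row_junctions)

lemma count_obstructed :
    count (obstructed (α := α)) =
      rowSeries • count layerings - rowColSeries • count obstructed - delta := by
  rw [← count_reduced_head (P := HasFullCol) count_col_junctions
    (by simpa only [and_comm (a := HasFullCol _)] using count_rowCol_junctions),
    ← count_nonempty]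
  · congr! 3 with S
    ext x
    simp only [obstructed, Set.mem_ofPred_eq]
    tauto
  · rw [reduced_empty, Set.sep_eq_self_iff_mem_true.2, Set.ncard_singleton]
    simp [layer, HasFullCol]

lemma count_rootless : count (rootless (α := α)) = count layerings - count obstructed := by
  have hrow : {J : Finset (α × α) | IsBipartite J ∧ J = ∅ ∧ HasFullRow J} =
      {J | IsBipartite J ∧ J = ∅} := by
    ext J
    refine and_congr_right fun _ => and_iff_left_of_imp ?_
    rintro rfl
    simp [HasFullRow]
  have h := count_reduced_head (P := (· = ∅)) (count_empty_junction.trans (one_smul ℚ⟦X⟧ _).symm)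
    ((congrArg (count <| withSupport verts ·) hrow).trans
      (count_empty_junction.trans (one_smul ℚ⟦X⟧ _).symm))
  rwa [one_smul, one_smul, ← funext rootless_eq] at h

lemma count_tall : count (tall (α := α)) = count obstructed + (E - Psi) • delta := by
  have hfin : ∀ {F : Finset α → Set ((α → ℕ) × Finset (α × α))}, (∀ S, F S ⊆ layerings S) →
      ∀ S, (F S).Finite := fun hF S => (finite_layerings S).subset (hF S)
  have hrootless : ∀ S : Finset α, rootless S ⊆ layerings S := fun S => Set.sep_subset _ _
  have hshort : ∀ S : Finset α, short S ⊆ layerings S := fun S => Set.sep_subset _ _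
  have hunion := count_union_add_count_inter (hfin hrootless) (hfin hshort)
  rw [count_rootless_inter_short, count_rootless, count_short, count_graphs,
    ← eq_sub_iff_add_eq] at hunion
  rw [funext tall_eq, count_sdiff finite_layerings fun S =>
    Set.union_subset (hrootless S) (hshort S),
    hunion, sub_smul]
  abel

end Layering

section Elimination

/-- The denominator of the generating function of tall layerings. -/
noncomputable def denominator : ℚ⟦X⟧ := E * (2 * E + 1) + (E ^ 2 - 2 * E - 1) * Psi

/-- Together with `denominator`, it expresses the generating function of tall layerings as
`numerator / denominator - Psi`. -/
noncomputable def numerator : ℚ⟦X⟧ := 2 * E ^ 3 + E ^ 2 * (E - 2) * Psi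

lemma smul_eq_of_linear_system {R M : Type*} [CommRing R] [AddCommGroup M] [Module R M]
    {e n f k : R} {c x g d : M} (hc : c = e • x) (hx : x = n • c - f • g)
    (hg : g = f • c - k • g - d) :
    ((1 - e * n) * (1 + k) + e * f ^ 2) • g = -(1 - e * n) • d := by
  have hcg : (1 - e * n) • c = -(e * f) • g := by
    linear_combination (norm := module) hc + e • hx
  linear_combination (norm := module) (1 - e * n) • hg + f • hcg

variable {α : Type*} [DecidableEq α] [Finite α]

lemma denominator_smul :
    denominator • (count obstructed + E • delta) = numerator • (delta : SetFunction α) := by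
  have h := congrArg (E ^ 2 • ·) <|
    smul_eq_of_linear_system (count_layerings (α := α)) count_reduced count_obstructed
  simp only [← mul_smul] at h
  have hden : E ^ 2 * ((1 - E * junctionSeries) * (1 + rowColSeries) + E * rowSeries ^ 2) =
      denominator := by
    rw [junctionSeries, rowColSeries, rowSeries, denominator]
    grind [expNeg_mul_E]
  have hnum : E ^ 2 * -(1 - E * junctionSeries) + denominator * E = numerator := by
    rw [junctionSeries, denominator, numerator]
    grind [expNeg_mul_E]
  rw [hden] at h
  rw [smul_add, h, ← mul_smul, ← add_smul, hnum]

lemma denominator_mul_inv : denominator * denominator⁻¹ = 1 := by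
  refine PowerSeries.mul_inv_cancel _ ?_
  have hE : constantCoeff E = 1 := by simp [E]
  have hPsi : constantCoeff Psi = 1 := by simp [Psi, ← coeff_zero_eq_constantCoeff_apply]
  norm_num [denominator, hE, hPsi]

lemma count_tall_eq :
    count tall = (numerator * denominator⁻¹ - Psi) • (delta : SetFunction α) := by
  have h := congrArg (denominator⁻¹ • ·) (denominator_smul (α := α))
  simp only [← mul_smul, mul_comm _ denominator, denominator_mul_inv, one_smul] at h
  rw [sub_smul, mul_comm, ← h, count_tall, sub_smul]
  abel

end Elimination

section Rank

variable {α : Type*} {r : α → α → Prop} {rk rk' : α → ℕ}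

/-- The covering relation of the strict order `r`. -/
def Covers (r : α → α → Prop) (a b : α) : Prop := r a b ∧ ¬ ∃ c, r a c ∧ r c b

/-- The rank functions of weakly graded orders: `RelWeaklyGraded` asserts that one exists. As ranks
are natural numbers, `exists_root` says that the minimum on each connected component is `0`. -/
structure IsRankFunction (r : α → α → Prop) (rk : α → ℕ) : Prop where
  eq_of_covers : ∀ a b, Covers r a b → rk b = rk a + 1
  exists_root : ∀ v, ∃ u, Relation.ReflTransGen (fun a b => r a b ∨ r b a) v u ∧ rk u = 0

/-- The generalization of `RelAvoids31` to an arbitrary type. -/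
def Avoids31 (r : α → α → Prop) : Prop :=
  ¬ ∃ w x y z, r x y ∧ r y z ∧ (¬ r w x ∧ ¬ r x w) ∧ (¬ r w y ∧ ¬ r y w) ∧ (¬ r w z ∧ ¬ r z w)

/-- The relation `r` has a chain of three elements, provided it is transitive. -/
def HasThreeChain (r : α → α → Prop) : Prop := ∃ x y z, r x y ∧ r y z

lemma transGen_covers [Finite α] [IsStrictOrder α r] {a b : α} (h : r a b) :
    Relation.TransGen (Covers r) a b := by
  classical
  let := partialOrderOfSO r
  let := Fintype.ofFinite α
  let : LocallyFiniteOrder α := Fintype.toLocallyFiniteOrder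
  refine Relation.TransGen.mono (fun x y hxy => ?_) a b (transGen_covBy_of_lt (show a < b from h))
  exact ⟨hxy.1, fun ⟨c, hxc, hcy⟩ => hxy.2 hxc hcy⟩

namespace IsRankFunction

lemma exists_between (h : IsRankFunction r rk) {a b : α} (hab : r a b) (hgap : rk a + 2 ≤ rk b) :
    ∃ c, r a c ∧ r c b := by
  by_contra hcover
  have := h.eq_of_covers a b ⟨hab, hcover⟩
  lia

variable [Finite α] [IsStrictOrder α r]

lemma lt_of_rel (h : IsRankFunction r rk) {a b : α} (hab : r a b) : rk a < rk b := by
  have lift := (transGen_covers hab).lift rk (p := (· < ·)) fun x y hxy =>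
    (Nat.lt_succ_self (rk x)).trans_eq (h.eq_of_covers x y hxy).symm
  exact Relation.transGen_eq_self.le _ _ lift

lemma exists_between_of_lt_of_lt (h : IsRankFunction r rk) {a c : α} (hac : r a c) {m : ℕ}
    (ha : rk a < m) (hc : m < rk c) : ∃ b, r a b ∧ r b c ∧ rk b = m := by
  induction hd : rk c - rk a using Nat.strong_induction_on generalizing a c with
  | _ d ih =>
    obtain ⟨b, hab, hbc⟩ := h.exists_between hac (by lia)
    have := h.lt_of_rel hab
    have := h.lt_of_rel hbc
    obtain hm | hm | hm := lt_trichotomy (rk b) m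
    · obtain ⟨x, hbx, hxc, hx⟩ := ih _ (by lia) hbc hm hc rfl
      exact ⟨x, _root_.trans hab hbx, hxc, hx⟩
    · exact ⟨b, hab, hbc, hm⟩
    · obtain ⟨x, hax, hxb, hx⟩ := ih _ (by lia) hab ha hm rfl
      exact ⟨x, hax, _root_.trans hxb hbc, hx⟩

/-- The difference of two rank functions is constant along covers, hence on connected
components. -/
lemma le_of_isRankFunction (h : IsRankFunction r rk) (h' : IsRankFunction r rk') (a : α) :
    rk a ≤ rk' a := by
  have const_of_rel : ∀ {x y}, r x y → (rk x : ℤ) - rk' x = rk y - rk' y := fun hxy => by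
    have lift := (transGen_covers hxy).lift (fun x => (rk x : ℤ) - rk' x) (p := (· = ·))
      fun x y hxy => by simp [Function.onFun, h.eq_of_covers x y hxy, h'.eq_of_covers x y hxy]
    exact Relation.transGen_eq_self.le _ _ lift
  have const_of_connected : ∀ {u}, Relation.ReflTransGen (fun x y => r x y ∨ r y x) a u →
      (rk a : ℤ) - rk' a = rk u - rk' u := fun hau => by
    induction hau with
    | refl => rfl
    | tail _ hxy ih => exact ih.trans (hxy.elim const_of_rel fun hyx => (const_of_rel hyx).symm)
  obtain ⟨u, hau, hu⟩ := h.exists_root a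
  have := const_of_connected hau
  lia

lemma eq_of_isRankFunction (h : IsRankFunction r rk) (h' : IsRankFunction r rk') : rk = rk' :=
  funext fun a => (h.le_of_isRankFunction h' a).antisymm (h'.le_of_isRankFunction h a)

variable (h : IsRankFunction r rk) (havoid : Avoids31 r)
include h havoid

lemma rel_of_add_two_le_of_rel_left {a c w : α} (hac : r a c) (hc : rk a + 2 ≤ rk c)
    (hw : rk a + 2 ≤ rk w) : r a w := by
  obtain ⟨z, haz, hz⟩ : ∃ z, r a z ∧ rk z = rk a + 2 := by
    obtain heq | hlt := hc.eq_or_lt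
    · exact ⟨c, hac, heq.symm⟩
    · obtain ⟨z, haz, -, hz⟩ := h.exists_between_of_lt_of_lt hac (by lia) hlt
      exact ⟨z, haz, hz⟩
  obtain ⟨y, hay, hyz⟩ := h.exists_between haz hz.ge
  by_contra haw
  have not_rel : ∀ {u}, rk u ≤ rk w → ¬ r w u := fun hu hwu => (h.lt_of_rel hwu).not_ge hu
  have := h.lt_of_rel hyz
  exact havoid ⟨w, a, y, z, hay, hyz, ⟨not_rel (by lia), haw⟩,
    ⟨not_rel (by lia), fun hyw => haw (_root_.trans hay hyw)⟩,
    ⟨not_rel (by lia), fun hzw => haw (_root_.trans haz hzw)⟩⟩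

lemma rel_of_add_two_le_of_rel_right {a c w : α} (hac : r a c) (hc : rk a + 2 ≤ rk c)
    (hw : rk w + 2 ≤ rk c) : r w c := by
  obtain ⟨x, hxc, hx⟩ : ∃ x, r x c ∧ rk x + 2 = rk c := by
    obtain heq | hlt := hc.eq_or_lt
    · exact ⟨a, hac, heq⟩
    · obtain ⟨x, -, hxc, hx⟩ := h.exists_between_of_lt_of_lt hac (m := rk c - 2) (by lia) (by lia)
      exact ⟨x, hxc, by lia⟩
  obtain ⟨y, hxy, hyc⟩ := h.exists_between hxc hx.le
  by_contra hwc
  have not_rel : ∀ {u}, rk w ≤ rk u → ¬ r u w := fun hu huw => (h.lt_of_rel huw).not_ge hu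
  have := h.lt_of_rel hxy
  exact havoid ⟨w, x, y, c, hxy, hyc,
    ⟨fun hwx => hwc (_root_.trans hwx hxc), not_rel (by lia)⟩,
    ⟨fun hwy => hwc (_root_.trans hwy hyc), not_rel (by lia)⟩, ⟨hwc, not_rel (by lia)⟩⟩

lemma rel_of_add_two_le (hchain : HasThreeChain r) {u v : α} (huv : rk u + 2 ≤ rk v) : r u v := by
  obtain ⟨a, b, c, hab, hbc⟩ := hchain
  have hac : r a c := _root_.trans hab hbc
  have hgap : rk a + 2 ≤ rk c := by
    have := h.lt_of_rel hab
    have := h.lt_of_rel hbc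
    lia
  by_cases hv : rk a + 2 ≤ rk v
  · have hav := h.rel_of_add_two_le_of_rel_left havoid hac hgap hv
    exact h.rel_of_add_two_le_of_rel_right havoid hav hv huv
  · have huc := h.rel_of_add_two_le_of_rel_right havoid hac hgap (w := u) (by lia)
    exact h.rel_of_add_two_le_of_rel_left havoid huc (by lia) huv

end IsRankFunction

end Rank

section Layers

variable {α : Type*} {lv : α → ℕ} {H : Finset (α × α)} {r : α → α → Prop}

/-- The order encoded by a layering: elements two levels apart are comparable, elements on
consecutive levels are comparable unless `H` forbids it. -/
def layerRel (lv : α → ℕ) (H : Finset (α × α)) (a b : α) : Prop :=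
  lv a + 2 ≤ lv b ∨ lv b = lv a + 1 ∧ (a, b) ∉ H

lemma lt_of_layerRel {a b : α} (hab : layerRel lv H a b) : lv a < lv b := by
  unfold layerRel at hab
  lia

instance : IsStrictOrder α (layerRel lv H) where
  irrefl _ h := (lt_of_layerRel h).false
  trans _ _ _ hab hbc := by
    have := lt_of_layerRel hab
    have := lt_of_layerRel hbc
    exact .inl (by lia)

/-- The pairs of incomparable elements on consecutive levels. -/
noncomputable def consecutiveIncomparable [Fintype α] (r : α → α → Prop) (rk : α → ℕ) :
    Finset (α × α) := by
  classical exact {p | rk p.2 = rk p.1 + 1 ∧ ¬ r p.1 p.2}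

lemma mem_consecutiveIncomparable [Fintype α] {rk : α → ℕ} {a b : α} :
    (a, b) ∈ consecutiveIncomparable r rk ↔ rk b = rk a + 1 ∧ ¬ r a b := by
  simp [consecutiveIncomparable]

lemma layerRel_consecutiveIncomparable [Fintype α] [IsStrictOrder α r] {rk : α → ℕ}
    (h : IsRankFunction r rk) (havoid : Avoids31 r) (hchain : HasThreeChain r) :
    layerRel rk (consecutiveIncomparable r rk) = r := by
  ext a b
  rw [layerRel, mem_consecutiveIncomparable]
  constructor
  · rintro (hgap | ⟨hab, hnot⟩)
    · exact h.rel_of_add_two_le havoid hchain hgap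
    · exact not_not.1 fun hab' => hnot ⟨hab, hab'⟩
  · intro hab
    have := h.lt_of_rel hab
    by_cases hgap : rk a + 2 ≤ rk b
    · exact .inl hgap
    · exact .inr ⟨by lia, fun hnot => hnot.2 hab⟩

variable [DecidableEq α]

lemma hasFullRow_layer_iff {i : ℕ} (hi : ∃ a, lv a = i) :
    HasFullRow (layer lv H i) ↔ ∃ x, lv x = i ∧ ∀ y ∈ targets (layer lv H i), (x, y) ∈ H := by
  constructor
  · intro hrow
    obtain hempty | hne := (layer lv H i).eq_empty_or_nonempty
    · obtain ⟨x, hx⟩ := hi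
      exact ⟨x, hx, by simp [hempty, targets]⟩
    · obtain ⟨x, hx⟩ := hrow hne
      obtain ⟨⟨a, b⟩, hab⟩ := hne
      exact ⟨x, (mem_layer.1 (hx b (mem_targets.2 ⟨a, hab⟩))).2, fun y hy =>
        (mem_layer.1 (hx y hy)).1⟩
  · rintro ⟨x, hx, hrow⟩ -
    exact ⟨x, fun y hy => mem_layer.2 ⟨hrow y hy, hx⟩⟩

variable {S : Finset α}

lemma hasFullCol_layer_iff (h : IsStratified S lv H) {i : ℕ} (hi : ∃ a, lv a = i + 1) :
    HasFullCol (layer lv H i) ↔ ∃ z, lv z = i + 1 ∧ ∀ y ∈ sources (layer lv H i), (y, z) ∈ H := by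
  constructor
  · intro hcol
    obtain hempty | hne := (layer lv H i).eq_empty_or_nonempty
    · obtain ⟨z, hz⟩ := hi
      exact ⟨z, hz, by simp [hempty, sources]⟩
    · obtain ⟨z, hz⟩ := hcol hne
      obtain ⟨⟨a, b⟩, hab⟩ := hne
      obtain ⟨haz, ha⟩ := mem_layer.1 (hz a (mem_sources.2 ⟨b, hab⟩))
      exact ⟨z, ha ▸ h.level_target a z haz, fun y hy => (mem_layer.1 (hz y hy)).1⟩
  · rintro ⟨z, -, hcol⟩ -
    refine ⟨z, fun y hy => mem_layer.2 ⟨hcol y hy, ?_⟩⟩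
    obtain ⟨b, hb⟩ := mem_sources.1 hy
    exact (mem_layer.1 hb).2

lemma blocked_iff (h : IsStratified S lv H) {i : ℕ} (hi : ∃ a, lv a = i)
    (hi' : ∃ a, lv a = i + 2) : Blocked lv H i ↔ ∃ x z, lv x = i ∧ lv z = i + 2 ∧
      ∀ y, lv y = i + 1 → (x, y) ∈ H ∨ (y, z) ∈ H := by
  rw [Blocked, hasFullRow_layer_iff hi, hasFullCol_layer_iff h hi']
  have hlevel := h.level_target
  constructor
  · rintro ⟨hverts, ⟨x, hx, hrow⟩, z, hz, hcol⟩
    refine ⟨x, z, hx, hz, fun y hy => ?_⟩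
    obtain ⟨b, hyb⟩ | ⟨a, hay⟩ := mem_verts.1 (hverts y hy)
    · exact .inr (hcol y (mem_sources.2 ⟨b, mem_layer.2 ⟨hyb, hy⟩⟩))
    · have := hlevel a y hay
      exact .inl (hrow y (mem_targets.2 ⟨a, mem_layer.2 ⟨hay, by lia⟩⟩))
  · rintro ⟨x, z, hx, hz, hxz⟩
    refine ⟨fun y hy => ?_, ⟨x, hx, fun y hy => ?_⟩, z, hz, fun y hy => ?_⟩
    · obtain hxy | hyz := hxz y hy
      exacts [mem_verts.2 (.inr ⟨x, hxy⟩), mem_verts.2 (.inl ⟨z, hyz⟩)]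
    · obtain ⟨a, hay⟩ := mem_targets.1 hy
      rw [mem_layer] at hay
      exact (hxz y (hay.2 ▸ hlevel a y hay.1)).resolve_right (h.not_consecutive hay.1)
    · obtain ⟨b, hyb⟩ := mem_sources.1 hy
      rw [mem_layer] at hyb
      exact (hxz y hyb.2).resolve_left fun hxy => h.not_consecutive hxy hyb.1

lemma avoids31_layerRel (h : IsStratified S lv H) : Avoids31 (layerRel lv H) := by
  rintro ⟨w, x, y, z, hxy, hyz, hx, -, hz⟩
  have := lt_of_layerRel hxy
  have := lt_of_layerRel hyz
  have := h.not_consecutive (a := x) (b := w) (c := z)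
  unfold layerRel at *
  grind

variable [Fintype α]

lemma exists_layerRel_between (hx : (lv, H) ∈ layerings univ) {a b : α} (hab : lv a + 2 ≤ lv b) :
    ∃ c, lv c = lv a + 1 ∧ layerRel lv H a c ∧ layerRel lv H c b := by
  have hlevel : ∃ z, lv z = lv a + 2 := exists_level_eq hx (by lia) hab
  have hopen := hx.2 (lv a) ⟨b, hab⟩
  rw [blocked_iff hx.1 ⟨a, rfl⟩ hlevel] at hopen
  push Not at hopen
  by_cases hb : lv b = lv a + 2
  · obtain ⟨c, hc, hac, hcb⟩ := hopen a b rfl hb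
    exact ⟨c, hc, .inr ⟨hc, hac⟩, .inr ⟨by lia, hcb⟩⟩
  · obtain ⟨z, hz⟩ := hlevel
    obtain ⟨c, hc, hac, -⟩ := hopen a z rfl hz
    exact ⟨c, hc, .inr ⟨hc, hac⟩, .inl (by lia)⟩

lemma isRankFunction_layerRel (hx : (lv, H) ∈ tall univ) : IsRankFunction (layerRel lv H) lv where
  eq_of_covers a b hab := by
    refine hab.1.elim (fun hgap => absurd ?_ hab.2) And.left
    obtain ⟨c, -, hac, hcb⟩ := exists_layerRel_between hx.1 hgap
    exact ⟨c, hac, hcb⟩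
  exists_root v := by
    obtain ⟨hx, ⟨u, -, hu⟩, t, ht⟩ := hx
    obtain ⟨z, hz⟩ : ∃ z, lv z = 2 := exists_level_eq hx two_pos ht
    have huz : layerRel lv H u z := .inl (by lia)
    obtain hv | hv | hv : lv v = 0 ∨ lv v = 1 ∨ 2 ≤ lv v := by lia
    · exact ⟨v, .refl, hv⟩
    · refine ⟨u, ?_, hu⟩
      by_cases huv : (u, v) ∈ H
      · have hvz : layerRel lv H v z := .inr ⟨by lia, hx.1.not_consecutive huv⟩
        exact .tail (.single (.inl hvz)) (.inr huz)
      · exact .single (.inr (.inr ⟨by lia, huv⟩))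
    · exact ⟨u, .single (.inr (.inl (by lia))), hu⟩

lemma hasThreeChain_layerRel (hx : (lv, H) ∈ tall univ) : HasThreeChain (layerRel lv H) := by
  obtain ⟨hx, ⟨u, -, hu⟩, t, ht⟩ := hx
  obtain ⟨c, -, huc, hct⟩ := exists_layerRel_between hx (a := u) (b := t) (by lia)
  exact ⟨u, c, t, huc, hct⟩

section

variable [IsStrictOrder α r] {rk : α → ℕ} (h : IsRankFunction r rk) (havoid : Avoids31 r)
  (hchain : HasThreeChain r)
include h havoid hchain

lemma isStratified_consecutiveIncomparable :
    IsStratified univ rk (consecutiveIncomparable r rk) := by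
  refine .of_edges (by simp) (fun a b hab => by simp [(mem_consecutiveIncomparable.1 hab).1]) ?_
  intro x w z hxw hwz
  rw [mem_consecutiveIncomparable] at hxw hwz
  obtain ⟨y, hxy, hyz⟩ :=
    h.exists_between (h.rel_of_add_two_le havoid hchain (u := x) (v := z) (by lia)) (by lia)
  have hx := h.lt_of_rel hxy
  have hz := h.lt_of_rel hyz
  have not_rel : ∀ {u v}, rk v ≤ rk u → ¬ r u v := fun hle huv => (h.lt_of_rel huv).not_ge hle
  exact havoid ⟨w, x, y, z, hxy, hyz, ⟨not_rel (by lia), hxw.2⟩,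
    ⟨not_rel (by lia), not_rel (by lia)⟩, ⟨hwz.2, not_rel (by lia)⟩⟩

lemma mem_tall_consecutiveIncomparable : (rk, consecutiveIncomparable r rk) ∈ tall univ := by
  have hstrat := isStratified_consecutiveIncomparable h havoid hchain
  have hrel := fun {u v} => h.rel_of_add_two_le havoid hchain (u := u) (v := v)
  obtain ⟨x, y, z, hxy, hyz⟩ := hchain
  have := h.lt_of_rel hxy
  have := h.lt_of_rel hyz
  obtain ⟨u, -, hu⟩ := h.exists_root x
  refine ⟨⟨hstrat, fun i ⟨a, ha⟩ => ?_⟩, ⟨u, mem_univ u, hu⟩, z, by lia⟩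
  have inhabited : ∀ j ≤ rk a, ∃ b, rk b = j := fun j hj => by
    obtain rfl | hpos := j.eq_zero_or_pos
    · exact ⟨u, hu⟩
    obtain rfl | hlt := hj.eq_or_lt
    · exact ⟨a, rfl⟩
    · obtain ⟨b, -, -, hb⟩ := h.exists_between_of_lt_of_lt (hrel (u := u) (v := a) (by lia))
        (by lia) hlt
      exact ⟨b, hb⟩
  rw [blocked_iff hstrat (inhabited _ (by lia)) (inhabited _ ha)]
  rintro ⟨v, w, hv, hw, hvw⟩
  obtain ⟨c, hvc, hcw⟩ := h.exists_between (hrel (u := v) (v := w) (by lia)) (by lia)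
  have := h.lt_of_rel hvc
  have := h.lt_of_rel hcw
  have hopen := hvw c (by lia)
  simp only [mem_consecutiveIncomparable] at hopen
  tauto

end

lemma consecutiveIncomparable_layerRel (h : IsStratified S lv H) :
    consecutiveIncomparable (layerRel lv H) lv = H := by
  ext ⟨a, b⟩
  have := h.level_target a b
  simp only [mem_consecutiveIncomparable, layerRel]
  grind

end Layers

section Posets

/-- The strict orders on `α` that are weakly graded and avoid `3+1`. -/
def gradedOrders (α : Type*) : Set (α → α → Prop) :=
  {r | IsStrictOrder α r ∧ (∃ rk, IsRankFunction r rk) ∧ Avoids31 r}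

lemma mem_gradedOrders_of_not_hasThreeChain {α : Type*} {r : α → α → Prop}
    [IsStrictOrder α r] (h : ¬ HasThreeChain r) : r ∈ gradedOrders α := by
  classical
  have hchain : ∀ {a b c}, r a b → ¬ r b c := fun hab hbc => h ⟨_, _, _, hab, hbc⟩
  refine ⟨inferInstance, ⟨fun b => if ∃ a, r a b then 1 else 0, ⟨?_, fun v => ?_⟩⟩, ?_⟩
  · rintro a b ⟨hab, -⟩
    rw [if_pos ⟨a, hab⟩, if_neg fun ⟨c, hca⟩ => hchain hca hab]
  · by_cases hv : ∃ u, r u v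
    · obtain ⟨u, huv⟩ := hv
      exact ⟨u, .single (.inr huv), if_neg fun ⟨c, hcu⟩ => hchain hcu huv⟩
    · exact ⟨v, .refl, if_neg hv⟩
  · rintro ⟨w, x, y, z, hxy, hyz, -⟩
    exact hchain hxy hyz

variable (α : Type*) [Fintype α] [DecidableEq α]

lemma bijOn_layerRel : Set.BijOn (fun x => layerRel x.1 x.2) (tall (univ : Finset α))
    {r ∈ gradedOrders α | HasThreeChain r} := by
  refine .mk ?_ ?_ ?_
  · exact fun x hx => ⟨⟨inferInstance, ⟨x.1, isRankFunction_layerRel hx⟩,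
      avoids31_layerRel hx.1.1⟩, hasThreeChain_layerRel hx⟩
  · rintro ⟨lv, H⟩ hx ⟨lv', H'⟩ hx' (heq : layerRel lv H = layerRel lv' H')
    have hrank : IsRankFunction (layerRel lv H) lv' := heq ▸ isRankFunction_layerRel hx'
    obtain rfl : lv = lv' := (isRankFunction_layerRel hx).eq_of_isRankFunction hrank
    have hH : IsStratified univ lv H := hx.1.1
    have hH' : IsStratified univ lv H' := hx'.1.1
    rw [← consecutiveIncomparable_layerRel hH, heq, consecutiveIncomparable_layerRel hH']
  · rintro r ⟨⟨_, ⟨rk, h⟩, havoid⟩, hchain⟩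
    exact ⟨(rk, consecutiveIncomparable r rk), mem_tall_consecutiveIncomparable h havoid hchain,
      layerRel_consecutiveIncomparable h havoid hchain⟩

lemma bijOn_mem_bipartite : Set.BijOn (fun H a b => (a, b) ∈ H)
    (within verts {H : Finset (α × α) | IsBipartite H} univ)
    {r ∈ gradedOrders α | ¬ HasThreeChain r} := by
  classical
  refine .mk ?_ ?_ ?_
  · rintro H ⟨hH : IsBipartite H, -⟩
    have hchain : ∀ {a b c}, (a, b) ∈ H → (b, c) ∉ H := fun hab =>
      isBipartite_iff.1 hH _ _ _ hab
    have : IsStrictOrder α (fun a b => (a, b) ∈ H) :=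
      { irrefl := fun a ha => hchain ha ha, trans := fun a b c hab hbc => absurd hbc (hchain hab) }
    have not_hasThreeChain : ¬ HasThreeChain (fun a b => (a, b) ∈ H) :=
      fun ⟨_, _, _, hxy, hyz⟩ => hchain hxy hyz
    exact ⟨mem_gradedOrders_of_not_hasThreeChain not_hasThreeChain, not_hasThreeChain⟩
  · exact fun H _ H' _ heq => Finset.ext fun p => iff_of_eq (congrFun₂ heq p.1 p.2)
  · rintro r ⟨-, hr⟩
    refine ⟨({p | r p.1 p.2} : Finset (α × α)),
      ⟨isBipartite_iff.2 fun a b c hab hbc => hr ⟨a, b, c, ?_, ?_⟩, subset_univ _⟩, by simp⟩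
    · simpa using hab
    · simpa using hbc

omit [DecidableEq α] in
lemma ncard_gradedOrders :
    ((gradedOrders α).ncard : ℚ) =
      (Fintype.card α)! * coeff (Fintype.card α)
        (numerator * denominator⁻¹ + (ExpNeg - 1) * Psi) := by
  classical
  have hsplit : (gradedOrders α).ncard = (tall (univ : Finset α)).ncard +
      (within verts {H : Finset (α × α) | IsBipartite H} univ).ncard := by
    rw [(bijOn_layerRel α).ncard_eq, (bijOn_mem_bipartite α).ncard_eq, ← Set.ncard_union_eq]
    · congr 1
      ext r
      simp only [Set.mem_union, Set.mem_ofPred_eq]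
      tauto
    · exact Set.disjoint_left.2 fun r hr hr' => hr'.2 hr.2
  rw [hsplit, Nat.cast_add, ← count_apply, ← count_apply, count_tall_eq, count_bipartite,
    ← SetFunction.add_apply, ← add_smul, smul_delta_apply, card_univ]
  congr 2
  ring

end Posets

lemma wCount_eq_ncard (n : ℕ) : wCount n = (gradedOrders (Fin n)).ncard := by
  rw [wCount, ← Nat.card_coe_set_eq]
  refine Nat.card_congr (Equiv.subtypeEquivRight fun r => ?_)
  refine and_congr ⟨fun h => { irrefl := h.1, trans := h.2 }, fun h => ⟨h.irrefl, h.trans⟩⟩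
    (and_congr_left' ⟨fun ⟨rk, hcovers, hroot⟩ =>
        ⟨rk, fun a b hab => hcovers a b hab.1 hab.2, hroot⟩,
      fun ⟨rk, h⟩ => ⟨rk, fun a b hab hcover => h.eq_of_covers a b ⟨hab, hcover⟩, h.exists_root⟩⟩)

lemma W_eq : W = numerator * denominator⁻¹ + (ExpNeg - 1) * Psi := by
  ext n
  have := n.factorial_ne_zero
  rw [W, coeff_mk, wCount_eq_ncard, ncard_gradedOrders, Fintype.card_fin]
  field_simp

end WeaklyGraded

theorem weakly_graded_gf :
    (W - (ExpNeg - 1) * Psi) * (E * (2 * E + 1) + (E ^ 2 - 2 * E - 1) * Psi) =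
      2 * E ^ 3 + E ^ 2 * (E - 2) * Psi := by
  calc (W - (ExpNeg - 1) * Psi) * (E * (2 * E + 1) + (E ^ 2 - 2 * E - 1) * Psi)
      = WeaklyGraded.numerator * (WeaklyGraded.denominator * WeaklyGraded.denominator⁻¹) := by
        rw [WeaklyGraded.W_eq, WeaklyGraded.denominator]
        ring
    _ = 2 * E ^ 3 + E ^ 2 * (E - 2) * Psi := by
        rw [WeaklyGraded.denominator_mul_inv, mul_one, WeaklyGraded.numerator]
end
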